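/- arXiv:1104.0440 — 8 statements merged into one kernel-verified Lean document; each statement's English description precedes it below -/
import Mathlib

section
/- Under assumption (H), the Abel equation (N) admits a C¹, T-periodic solution x*: ℝ → ℝ (a solution of (N) on all of ℝ) which has the sign of −A·B, i.e., for every t ∈ ℝ: x*(t) < 0 whenever A(t)·B(t) > 0, x*(t) > 0 whenever A(t)·B(t) < 0, and x*(t) = 0 if and only if A(t) = 0. -/
/-!
Let `β = |B|`, which never vanishes, so that `B = -σ β` with a constant sign `σ = ±1`. The solution
is sought as `x = σ A p` with `p > 0` continuous. Off the zeros of `A`, the equation becomes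

  `A p' = 1/p - β - g p`,   `g = A' - C A`,

and where `A = 0` it suffices that the right-hand side vanishes: then `A p` has derivative `A' p`
there, which is the value `1/p - β + C A p` of the continuous function giving `(A p)'` elsewhere.
So everything reduces to a positive, continuous, periodic `p` solving this singular equation along
the flow `φ` of the vector field `A`, whose zeros are rest points.

Since `A` has a zero in each period and `A' ≥ -a`, where `a = -min A'`, one has `|A| ≤ a T`, hence
`g ≥ -m` with `m = a (1 + T max |C|)`, and the hypothesis says `b² > 4 m` for `b = min |B|`. For
`0 < p ≤ 2/b` the `p`-derivative `-1/p² - g` of the right-hand side is at most `-(b²/4 - m) < 0`,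
and the right-hand side is negative at `p = 2/b` and nonnegative at some small `p = 1/Q`. For `N`
large the map `H t q = q + (1/q - β - g q)/N` is therefore a contraction of `[1/Q, 2/b]`, uniformly
in `t`, and the equation reads `(A/N) p' = H t p - p`. Equivalently, `p` is a fixed point of

  `p ↦ (t ↦ ∫_{-∞}^0 e^τ H (φ τ t, p (φ τ t)) dτ)`,

`φ` now being the flow of `A/N`; this is a contraction of the space of bounded continuous functions
(`exists_periodic_solution_along_flow`, `exists_profile`).
-/

open Set Filter Topology

open MeasureTheory

/-! ### The flow of a bounded Lipschitz vector field on the line -/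

lemma integralCurve_unique {V : ℝ → ℝ} {K : NNReal} (hK : LipschitzWith K V)
    {γ δ : ℝ → ℝ} (hγ : ∀ s, HasDerivAt γ (V (γ s)) s) (hδ : ∀ s, HasDerivAt δ (V (δ s)) s)
    (h0 : γ 0 = δ 0) : γ = δ :=
  ODE_solution_unique_univ (v := fun _ => V) (s := fun _ => univ) (K := K) (t₀ := 0)
    (fun _ => hK.lipschitzOnWith) (fun t => ⟨hγ t, trivial⟩) (fun t => ⟨hδ t, trivial⟩) h0

/-- Picard–Lindelöf on `(-n, n)` for every `n`, with the local solutions glued by uniqueness. -/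
lemma exists_integralCurve {V : ℝ → ℝ} {K L : NNReal} (hK : LipschitzWith K V)
    (hL : ∀ t, ‖V t‖ ≤ L) (x : ℝ) :
    ∃ γ : ℝ → ℝ, γ 0 = x ∧ ∀ s, HasDerivAt γ (V (γ s)) s := by
  have key : ∀ n : ℝ, ∃ α : ℝ → ℝ, α 0 = x ∧ ∀ s ∈ Ioo (-n) n, HasDerivAt α (V (α s)) s := by
    intro n
    rcases le_or_gt n 0 with hn | hn
    · exact ⟨fun _ => x, rfl, fun s hs => absurd (hs.1.trans hs.2) (by linarith)⟩
    have h0 : (0 : ℝ) ∈ Icc (-n) n := ⟨by linarith, hn.le⟩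
    have hpl : IsPicardLindelof (fun _ => V) (⟨0, h0⟩ : Icc (-n) n) x
        (L * n.toNNReal) 0 L K := by
      refine IsPicardLindelof.of_time_independent (fun y _ => hL y) hK.lipschitzOnWith ?_
      simp [hn.le]
    obtain ⟨α, hα0, hα⟩ := hpl.exists_eq_forall_mem_Icc_hasDerivWithinAt₀
    exact ⟨α, hα0, fun s hs => (hα s (Ioo_subset_Icc_self hs)).hasDerivAt
      (Icc_mem_nhds hs.1 hs.2)⟩
  choose α hα0 hα using key
  have hagree : ∀ m n : ℝ, 0 < m → m ≤ n → EqOn (α m) (α n) (Ioo (-m) m) := by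
    intro m n hm hmn
    refine ODE_solution_unique_of_mem_Ioo (v := fun _ => V) (s := fun _ => univ) (K := K)
      (t₀ := 0) (fun _ _ => hK.lipschitzOnWith) ⟨by linarith, hm⟩
      (fun t ht => ⟨hα m t ht, trivial⟩)
      (fun t ht => ⟨hα n t ⟨by linarith [ht.1], by linarith [ht.2]⟩, trivial⟩) ?_
    rw [hα0, hα0]
  refine ⟨fun s => α (|s| + 1) s, hα0 _, fun s => ?_⟩
  have hs : s ∈ Ioo (-(|s| + 1)) (|s| + 1) := by
    constructor <;> [linarith [neg_abs_le s]; linarith [le_abs_self s]]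
  refine (hα (|s| + 1) s hs).congr_of_eventuallyEq ?_
  filter_upwards [Ioo_mem_nhds hs.1 hs.2] with r hr
  have hr' : r ∈ Ioo (-(|r| + 1)) (|r| + 1) := by
    constructor <;> [linarith [neg_abs_le r]; linarith [le_abs_self r]]
  rcases le_total (|r| + 1) (|s| + 1) with h | h
  · exact hagree _ _ (by positivity) h hr'
  · exact (hagree _ _ (by positivity) h hr).symm

/-- `IsFlow V φ`: the map `φ s t` is the position at time `s` of the integral curve of the
autonomous vector field `V` which is at `t` at time `0`. -/
structure IsFlow (V : ℝ → ℝ) (φ : ℝ → ℝ → ℝ) : Prop where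
  zero : ∀ t, φ 0 t = t
  hasDerivAt : ∀ t s, HasDerivAt (fun s => φ s t) (V (φ s t)) s

lemma exists_isFlow {V : ℝ → ℝ} {K L : NNReal} (hK : LipschitzWith K V)
    (hL : ∀ t, ‖V t‖ ≤ L) : ∃ φ, IsFlow V φ := by
  choose γ h0 hγ using exists_integralCurve hK hL
  exact ⟨fun s t => γ t s, h0, hγ⟩

namespace IsFlow

variable {V : ℝ → ℝ} {φ : ℝ → ℝ → ℝ} {K : NNReal}

lemma continuous_time (h : IsFlow V φ) (t : ℝ) : Continuous fun s => φ s t :=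
  continuous_iff_continuousAt.2 fun s => (h.hasDerivAt t s).continuousAt

lemma add (h : IsFlow V φ) (hK : LipschitzWith K V) (r s t : ℝ) :
    φ r (φ s t) = φ (r + s) t := by
  refine congrFun (integralCurve_unique hK (γ := fun r => φ r (φ s t))
    (δ := fun r => φ (r + s) t) (h.hasDerivAt _) (fun r => ?_) ?_) r
  · exact (h.hasDerivAt t (r + s)).comp_add_const r s
  · simp [h.zero]

lemma add_period (h : IsFlow V φ) (hK : LipschitzWith K V) {T : ℝ} (hT : Function.Periodic V T)
    (s t : ℝ) : φ s (t + T) = φ s t + T := by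
  refine congrFun (integralCurve_unique hK (γ := fun s => φ s (t + T))
    (δ := fun s => φ s t + T) (h.hasDerivAt _) (fun s => ?_) ?_) s
  · rw [hT]
    exact (h.hasDerivAt t s).add_const T
  · simp [h.zero]

lemma eq_self_of_zero (h : IsFlow V φ) (hK : LipschitzWith K V) {t : ℝ} (ht : V t = 0)
    (s : ℝ) : φ s t = t := by
  refine congrFun (integralCurve_unique hK (γ := fun s => φ s t)
    (δ := fun _ => t) (h.hasDerivAt _) (fun s => ?_) ?_) s
  · rw [ht]
    exact hasDerivAt_const s t
  · simp [h.zero]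

/-- Continuous dependence on the initial point, by Grönwall applied to the reversed field `-V`. -/
lemma continuous_space (h : IsFlow V φ) (hK : LipschitzWith K V) {s : ℝ} (hs : s ≤ 0) :
    Continuous (φ s) := by
  have hback : ∀ t r, HasDerivAt (fun r => φ (-r) t) (-V (φ (-r) t)) r := fun t r => by
    simpa [Function.comp_def] using (h.hasDerivAt t (-r)).comp r (hasDerivAt_neg r)
  have hdist : ∀ t t', dist (φ s t) (φ s t') ≤ Real.exp (K * (-s)) * dist t t' := by
    intro t t'
    have := dist_le_of_trajectories_ODE (v := fun _ x => -V x) (K := K) (a := 0) (b := -s)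
      (f := fun r => φ (-r) t) (g := fun r => φ (-r) t') (δ := dist t t')
      (fun _ => hK.neg) ((h.continuous_time t).comp continuous_neg).continuousOn
      (fun r _ => (hback t r).hasDerivWithinAt)
      ((h.continuous_time t').comp continuous_neg).continuousOn
      (fun r _ => (hback t' r).hasDerivWithinAt) (by simp [h.zero]) (-s) ⟨by linarith, le_rfl⟩
    simpa [mul_comm] using this
  exact (LipschitzWith.of_dist_le_mul (K := ⟨Real.exp (K * (-s)), (Real.exp_pos _).le⟩)
    hdist).continuous

end IsFlow

/-! ### Averages along backward orbits -/

/-- The exponentially weighted average of `w` along the backward orbit of `t`. For the flow of `V`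
it is the bounded solution `u` of `V u' + u = w`. -/
noncomputable def backAvg (φ : ℝ → ℝ → ℝ) (w : ℝ → ℝ) (t : ℝ) : ℝ :=
  ∫ τ in Iic (0 : ℝ), Real.exp τ * w (φ τ t)

section backAvg

variable {V : ℝ → ℝ} {φ : ℝ → ℝ → ℝ} {K : NNReal} {w w' : ℝ → ℝ} {l u : ℝ}

lemma integrableOn_exp_mul_orbit (h : IsFlow V φ) (hw : Continuous w)
    (hl : ∀ t, l ≤ w t) (hu : ∀ t, w t ≤ u) (t c : ℝ) :
    IntegrableOn (fun τ => Real.exp τ * w (φ τ t)) (Iic c) := by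
  have hcont : Continuous fun τ => Real.exp τ * w (φ τ t) :=
    Real.continuous_exp.mul (hw.comp (h.continuous_time t))
  refine Integrable.mono' ((integrableOn_exp_Iic c).mul_const (max |l| |u|))
    hcont.aestronglyMeasurable (Eventually.of_forall fun τ => ?_)
  rw [norm_mul, Real.norm_of_nonneg (Real.exp_pos τ).le]
  exact mul_le_mul_of_nonneg_left (abs_le_max_abs_abs (hl _) (hu _)) (Real.exp_pos τ).le

lemma le_backAvg (h : IsFlow V φ) (hw : Continuous w)
    (hl : ∀ t, l ≤ w t) (hu : ∀ t, w t ≤ u) (t : ℝ) : l ≤ backAvg φ w t := by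
  have : ∫ τ in Iic (0 : ℝ), Real.exp τ * l = l := by
    rw [integral_mul_const, integral_exp_Iic_zero, one_mul]
  rw [← this]
  exact setIntegral_mono_on ((integrableOn_exp_Iic 0).mul_const l)
    (integrableOn_exp_mul_orbit h hw hl hu t 0) measurableSet_Iic
    fun τ _ => mul_le_mul_of_nonneg_left (hl _) (Real.exp_pos τ).le

lemma backAvg_le (h : IsFlow V φ) (hw : Continuous w)
    (hl : ∀ t, l ≤ w t) (hu : ∀ t, w t ≤ u) (t : ℝ) : backAvg φ w t ≤ u := by
  have : ∫ τ in Iic (0 : ℝ), Real.exp τ * u = u := by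
    rw [integral_mul_const, integral_exp_Iic_zero, one_mul]
  rw [← this]
  exact setIntegral_mono_on (integrableOn_exp_mul_orbit h hw hl hu t 0)
    ((integrableOn_exp_Iic 0).mul_const u) measurableSet_Iic
    fun τ _ => mul_le_mul_of_nonneg_left (hu _) (Real.exp_pos τ).le

lemma abs_backAvg_sub_le (h : IsFlow V φ) (hw : Continuous w) (hw' : Continuous w')
    (hl : ∀ t, l ≤ w t) (hu : ∀ t, w t ≤ u) (hl' : ∀ t, l ≤ w' t) (hu' : ∀ t, w' t ≤ u)
    {d : ℝ} (hd : ∀ t, |w t - w' t| ≤ d) (t : ℝ) :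
    |backAvg φ w t - backAvg φ w' t| ≤ d := by
  have hsub : backAvg φ w t - backAvg φ w' t = backAvg φ (fun t => w t - w' t) t := by
    simp only [backAvg, mul_sub]
    exact (integral_sub (integrableOn_exp_mul_orbit h hw hl hu t 0)
      (integrableOn_exp_mul_orbit h hw' hl' hu' t 0)).symm
  have h1 : ∀ t, -d ≤ w t - w' t := fun t => (abs_le.1 (hd t)).1
  have h2 : ∀ t, w t - w' t ≤ d := fun t => (abs_le.1 (hd t)).2
  rw [hsub]
  exact abs_le.2 ⟨le_backAvg h (hw.sub hw') h1 h2 t, backAvg_le h (hw.sub hw') h1 h2 t⟩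

lemma continuous_backAvg (h : IsFlow V φ) (hK : LipschitzWith K V) (hw : Continuous w)
    (hl : ∀ t, l ≤ w t) (hu : ∀ t, w t ≤ u) : Continuous (backAvg φ w) := by
  refine continuous_of_dominated (bound := fun τ => Real.exp τ * max |l| |u|)
    (fun t => (integrableOn_exp_mul_orbit h hw hl hu t 0).aestronglyMeasurable)
    (fun t => Eventually.of_forall fun τ => ?_) ((integrableOn_exp_Iic 0).mul_const _) ?_
  · rw [norm_mul, Real.norm_of_nonneg (Real.exp_pos τ).le]
    exact mul_le_mul_of_nonneg_left (abs_le_max_abs_abs (hl _) (hu _)) (Real.exp_pos τ).le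
  · filter_upwards [ae_restrict_mem measurableSet_Iic] with τ hτ
    exact continuous_const.mul (hw.comp (h.continuous_space hK hτ))

lemma hasDerivAt_backAvg (h : IsFlow V φ) (hK : LipschitzWith K V) (hw : Continuous w)
    (hl : ∀ t, l ≤ w t) (hu : ∀ t, w t ≤ u) (t : ℝ) :
    HasDerivAt (fun s => backAvg φ w (φ s t)) (w t - backAvg φ w t) 0 := by
  set k : ℝ → ℝ := fun τ => Real.exp τ * w (φ τ t) with hk
  have hkc : Continuous k := Real.continuous_exp.mul (hw.comp (h.continuous_time t))
  -- Translating the time variable turns the average at `φ s t` into an integral over `(-∞, s]`.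
  have hshift : ∀ s, backAvg φ w (φ s t) =
      Real.exp (-s) * (backAvg φ w t + ∫ τ in (0 : ℝ)..s, k τ) := by
    intro s
    have h1 : ∫ τ in Iic s, k τ = backAvg φ w t + ∫ τ in (0 : ℝ)..s, k τ := by
      rw [← intervalIntegral.integral_Iic_sub_Iic (integrableOn_exp_mul_orbit h hw hl hu t 0)
        (integrableOn_exp_mul_orbit h hw hl hu t s)]
      simp only [backAvg, hk]
      ring
    have h2 := (measurePreserving_add_right volume s).setIntegral_preimage_emb
      (measurableEmbedding_addRight s) k (Iic s)
    rw [← h1, ← h2, ← integral_const_mul]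
    have hpre : (fun x : ℝ => x + s) ⁻¹' Iic s = Iic 0 := by ext; simp
    rw [hpre]
    simp only [backAvg, hk]
    refine integral_congr_ae (Eventually.of_forall fun τ => ?_)
    simp only [h.add hK, ← mul_assoc, ← Real.exp_add]
    congr 2
    ring
  have hint : HasDerivAt (fun s => ∫ τ in (0 : ℝ)..s, k τ) (k 0) 0 :=
    intervalIntegral.integral_hasDerivAt_right (hkc.intervalIntegrable 0 0)
      hkc.aestronglyMeasurable.stronglyMeasurableAtFilter hkc.continuousAt
  have hexp : HasDerivAt (fun s : ℝ => Real.exp (-s)) (-1) 0 := by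
    simpa using (hasDerivAt_neg (0 : ℝ)).exp
  have := hexp.mul (hint.const_add (backAvg φ w t))
  rw [funext hshift]
  refine this.congr_deriv ?_
  simp [hk, h.zero]
  ring

end backAvg

/-! ### The fixed point -/

/-- If `H t ·` is a uniform contraction with bounded values, then `V p' = H t p - p` has a
continuous bounded solution `p`, in the sense of derivatives along the flow of `V`: it is the fixed
point of `p ↦ backAvg φ (fun t => H t (p t))` in the space of bounded continuous functions.
Uniqueness of the fixed point makes `p` periodic. -/
lemma exists_periodic_solution_along_flow {V : ℝ → ℝ} {φ : ℝ → ℝ → ℝ} {K κ : NNReal}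
    {l u T : ℝ} (h : IsFlow V φ) (hK : LipschitzWith K V) (hVT : Function.Periodic V T)
    {H : ℝ → ℝ → ℝ} (hH : Continuous (Function.uncurry H))
    (hl : ∀ t q, l ≤ H t q) (hu : ∀ t q, H t q ≤ u) (hκ : κ < 1)
    (hLip : ∀ t q r, |H t q - H t r| ≤ κ * |q - r|) (hHT : ∀ t q, H (t + T) q = H t q) :
    ∃ p : ℝ → ℝ, Continuous p ∧ Function.Periodic p T ∧ (∀ t, l ≤ p t) ∧ (∀ t, p t ≤ u) ∧
      ∀ t, HasDerivAt (fun s => p (φ s t)) (H t (p t) - p t) 0 := by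
  have hw : ∀ p : BoundedContinuousFunction ℝ ℝ, Continuous fun t => H t (p t) := fun p =>
    hH.comp (continuous_id.prodMk p.continuous)
  let F : BoundedContinuousFunction ℝ ℝ → BoundedContinuousFunction ℝ ℝ := fun p =>
    BoundedContinuousFunction.ofNormedAddCommGroup (backAvg φ fun t => H t (p t))
      (continuous_backAvg h hK (hw p) (fun t => hl t _) (fun t => hu t _)) (max |l| |u|)
      fun t => abs_le_max_abs_abs (le_backAvg h (hw p) (fun t => hl t _) (fun t => hu t _) t)
        (backAvg_le h (hw p) (fun t => hl t _) (fun t => hu t _) t)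
  have hF : ContractingWith κ F := by
    refine ⟨hκ, LipschitzWith.of_dist_le_mul fun p q => ?_⟩
    refine (BoundedContinuousFunction.dist_le (by positivity)).2 fun t => ?_
    refine abs_backAvg_sub_le h (hw p) (hw q) (fun t => hl t _) (fun t => hu t _)
      (fun t => hl t _) (fun t => hu t _) (fun t => (hLip t _ _).trans ?_) t
    have hpq : |p t - q t| ≤ dist p q := by
      simpa only [Real.dist_eq] using BoundedContinuousFunction.dist_coe_le_dist (f := p) (g := q) t
    exact mul_le_mul_of_nonneg_left hpq κ.2
  obtain ⟨p, hp⟩ : ∃ p, F p = p := ⟨_, hF.fixedPoint_isFixedPt⟩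
  have hp' : ∀ t, p t = backAvg φ (fun t => H t (p t)) t := fun t =>
    (congrArg (fun q : BoundedContinuousFunction ℝ ℝ => q t) hp).symm
  let pT : BoundedContinuousFunction ℝ ℝ :=
    p.compContinuous ⟨fun t => t + T, continuous_id.add continuous_const⟩
  have hpT : F pT = pT := by
    ext t
    change backAvg φ (fun t => H t (p (t + T))) t = p (t + T)
    rw [hp' (t + T)]
    simp only [backAvg, h.add_period hK hVT, hHT]
  have hper : pT = p := hF.fixedPoint_unique' hpT hp
  refine ⟨p, p.continuous, fun t => congrArg (fun q : BoundedContinuousFunction ℝ ℝ => q t) hper,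
    fun t => ?_, fun t => ?_, fun t => ?_⟩
  · rw [hp']
    exact le_backAvg h (hw p) (fun t => hl t _) (fun t => hu t _) t
  · rw [hp']
    exact backAvg_le h (hw p) (fun t => hl t _) (fun t => hu t _) t
  · have := hasDerivAt_backAvg h hK (hw p) (fun t => hl t _) (fun t => hu t _) t
    simpa only [← hp'] using this

/-- Off the zeros of `V`, a derivative along the flow is `V` times an ordinary derivative. -/
lemma hasDerivAt_of_along_flow {V : ℝ → ℝ} {φ : ℝ → ℝ → ℝ} (h : IsFlow V φ)
    (hV : Continuous V) {p : ℝ → ℝ} {t d : ℝ} (ht : V t ≠ 0)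
    (hp : HasDerivAt (fun s => p (φ s t)) d 0) : HasDerivAt p (d / V t) t := by
  have hstrict : HasStrictDerivAt (fun s => φ s t) (V (φ 0 t)) 0 :=
    hasStrictDerivAt_of_hasDerivAt_of_continuousAt
      (f' := fun s => V (φ s t)) (Eventually.of_forall (h.hasDerivAt t))
      (hV.comp (h.continuous_time t)).continuousAt
  rw [h.zero] at hstrict
  have hinv := (hstrict.to_localInverse ht).hasDerivAt
  set θ := hstrict.localInverse _ _ _ ht with hθ
  have hright : ∀ᶠ y in 𝓝 (φ 0 t), φ (θ y) t = y :=
    (hstrict.hasStrictFDerivAt_equiv ht).eventually_right_inverse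
  have hθ0 : θ (φ 0 t) = 0 := (hstrict.hasStrictFDerivAt_equiv ht).localInverse_apply_image
  rw [h.zero] at hinv hright hθ0
  rw [← hθ0] at hp
  refine ((hp.comp t hinv).congr_of_eventuallyEq ?_).congr_deriv (div_eq_mul_inv _ _).symm
  filter_upwards [hright] with y hy
  simp [hy]

/-- The positive solution of `A p' = 1/p - β - g p`. On `[1/Q, 2/b]` the right-hand side is strictly
decreasing in `p` with slope between `-N` and `-(b²/4 - m)`, and it points inwards at both ends,
so `q ↦ q + (1/q - β - g q)/N` is a contraction of this interval. -/
lemma exists_profile {T : ℝ} (hT : 0 < T) {A β g : ℝ → ℝ} (hA : ContDiff ℝ 1 A)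
    (hAT : Function.Periodic A T) (hβ : Continuous β) (hβT : Function.Periodic β T)
    (hg : Continuous g) (hgT : Function.Periodic g T) {b m : ℝ} (hb : 0 < b)
    (hm : 4 * m < b ^ 2) (hβb : ∀ t, b ≤ β t) (hgm : ∀ t, -m ≤ g t) :
    ∃ p : ℝ → ℝ, Continuous p ∧ Function.Periodic p T ∧ (∀ t, 0 < p t) ∧
      (∀ t, A t = 0 → 1 / p t - β t - g t * p t = 0) ∧
      ∀ t, A t ≠ 0 → HasDerivAt p ((1 / p t - β t - g t * p t) / A t) t := by
  have hbdd : ∀ f : ℝ → ℝ, Continuous f → Function.Periodic f T → ∃ M > 0, ∀ t, |f t| ≤ M := by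
    intro f hf hfT
    obtain ⟨M, hM⟩ := isBounded_iff_forall_norm_le.1 (hfT.isBounded_of_continuous hT.ne' hf)
    exact ⟨max M 1, by positivity, fun t => (hM _ ⟨t, rfl⟩).trans (le_max_left _ _)⟩
  obtain ⟨MA, hMA0, hMA⟩ := hbdd A hA.continuous hAT
  obtain ⟨Mβ, hMβ0, hMβ⟩ := hbdd β hβ hβT
  obtain ⟨G, hG0, hG⟩ := hbdd g hg hgT
  have hdA : Function.Periodic (deriv A) T := fun t => by
    rw [← deriv_comp_add_const, funext hAT]
  obtain ⟨K, hK0, hK⟩ := hbdd (deriv A) (hA.continuous_deriv le_rfl) hdA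
  set Q := Mβ + G * (2 / b) + b / 2 with hQ
  have hQ0 : 0 < Q := by positivity
  have hQb : b / 2 ≤ Q := by rw [hQ]; linarith [show 0 < G * (2 / b) by positivity]
  set N := G + Q ^ 2 with hN
  have hN0 : 0 < N := by positivity
  set η := b ^ 2 / 4 - m with hη
  have hη0 : 0 < η := by rw [hη]; linarith
  have hle : 1 / Q ≤ 2 / b := by
    rw [div_le_div_iff₀ hQ0 hb]; linarith
  have hηN : η ≤ N := by
    have := (abs_le.1 (hG 0)).2
    have := hgm 0
    rw [hη, hN]; nlinarith
  -- The field is rescaled to `A / N`, so that the damping rate is `1`.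
  set V : ℝ → ℝ := fun t => A t / N with hV
  have hVT : Function.Periodic V T := fun t => by simp only [hV, hAT t]
  have hVK : LipschitzWith (K / N).toNNReal V := by
    refine lipschitzWith_of_nnnorm_deriv_le
      ((hA.differentiable one_ne_zero).div_const N) fun t => ?_
    rw [← NNReal.coe_le_coe, coe_nnnorm, Real.coe_toNNReal _ (by positivity), hV,
      deriv_div_const, norm_div, Real.norm_of_nonneg hN0.le]
    exact div_le_div_of_nonneg_right (hK t) hN0.le
  have hVL : ∀ t, ‖V t‖ ≤ (MA / N).toNNReal := fun t => by
    rw [Real.coe_toNNReal _ (by positivity), hV, norm_div, Real.norm_of_nonneg hN0.le]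
    exact div_le_div_of_nonneg_right (hMA t) hN0.le
  obtain ⟨φ, hφ⟩ := exists_isFlow hVK hVL
  -- Clamping to `[1/Q, 2/b]` makes the nonlinearity globally defined.
  set cl : ℝ → ℝ := fun q => max (1 / Q) (min q (2 / b)) with hcl
  have hcl1 : ∀ q, 1 / Q ≤ cl q := fun q => le_max_left _ _
  have hcl2 : ∀ q, cl q ≤ 2 / b := fun q => max_le hle (min_le_right _ _)
  have hQ' : 0 < 1 / Q := by positivity
  have hcl0 : ∀ q, 0 < cl q := fun q => hQ'.trans_le (hcl1 q)
  have hclc : Continuous cl := continuous_const.max (continuous_id.min continuous_const)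
  have hclL : ∀ q r, |cl q - cl r| ≤ |q - r| := fun q r => by
    have h1 := abs_max_sub_max_le_abs (min q (2 / b)) (min r (2 / b)) (1 / Q)
    have h2 := abs_min_sub_min_le_max q (2 / b) r (2 / b)
    rw [sub_self, abs_zero, max_eq_left (abs_nonneg _)] at h2
    rw [max_comm, max_comm (min r _)] at h1
    exact h1.trans h2
  set f : ℝ → ℝ → ℝ := fun t q => q + (1 / q - β t - g t * q) / N with hf
  -- The difference quotient of `f t` on the interval lies in `[0, 1 - η / N]`.
  have hquot : ∀ t q r, 1 / Q ≤ q → q ≤ 2 / b → 1 / Q ≤ r → r ≤ 2 / b →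
      ∃ c, 0 ≤ c ∧ c ≤ 1 - η / N ∧ f t q - f t r = c * (q - r) := by
    intro t q r hq1 hq2 hr1 hr2
    have hq0 := hQ'.trans_le hq1
    have hr0 := hQ'.trans_le hr1
    refine ⟨1 - (1 / q * (1 / r) + g t) / N, ?_, ?_, ?_⟩
    · rw [sub_nonneg, div_le_one hN0, hN]
      have h1 : 1 / q ≤ Q := by rw [div_le_iff₀ hq0]; rwa [div_le_iff₀' hQ0] at hq1
      have h2 : 1 / r ≤ Q := by rw [div_le_iff₀ hr0]; rwa [div_le_iff₀' hQ0] at hr1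
      have := mul_le_mul h1 h2 (by positivity) hQ0.le
      linarith [(abs_le.1 (hG t)).2]
    · have h1 : b / 2 ≤ 1 / q := by
        rw [le_div_iff₀ hq0]; rw [le_div_iff₀ hb] at hq2; linarith
      have h2 : b / 2 ≤ 1 / r := by
        rw [le_div_iff₀ hr0]; rw [le_div_iff₀ hb] at hr2; linarith
      have := mul_le_mul h1 h2 (by positivity) (by positivity)
      have h3 : η ≤ 1 / q * (1 / r) + g t := by rw [hη]; linarith [hgm t]
      linarith [div_le_div_of_nonneg_right h3 hN0.le]
    · simp only [hf]
      field_simp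
      ring
  have hf1 : ∀ t q, 1 / Q ≤ q → q ≤ 2 / b → 1 / Q ≤ f t q := by
    intro t q h1 h2
    obtain ⟨c, hc0, -, hc⟩ := hquot t q (1 / Q) h1 h2 le_rfl hle
    have hend : 1 / Q ≤ f t (1 / Q) := by
      simp only [hf, one_div_one_div]
      have : 0 ≤ Q - β t - g t * (1 / Q) := by
        have h3 : g t * (1 / Q) ≤ G * (2 / b) :=
          mul_le_mul (abs_le.1 (hG t)).2 hle hQ'.le hG0.le
        rw [hQ] at h3 ⊢
        linarith [(abs_le.1 (hMβ t)).2]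
      linarith [div_nonneg this hN0.le]
    linarith [mul_nonneg hc0 (sub_nonneg.2 h1)]
  have hf2 : ∀ t q, 1 / Q ≤ q → q ≤ 2 / b → f t q ≤ 2 / b := by
    intro t q h1 h2
    obtain ⟨c, hc0, -, hc⟩ := hquot t (2 / b) q hle le_rfl h1 h2
    have hend : f t (2 / b) ≤ 2 / b := by
      simp only [hf, one_div_div]
      have : b / 2 - β t - g t * (2 / b) ≤ 0 := by
        have h3 : -m * (2 / b) ≤ g t * (2 / b) :=
          mul_le_mul_of_nonneg_right (hgm t) (by positivity)
        have h4 : m * (2 / b) ≤ b / 2 := by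
          rw [mul_div_assoc', div_le_iff₀ hb]; nlinarith
        linarith [hβb t]
      linarith [div_nonpos_of_nonpos_of_nonneg this hN0.le]
    linarith [mul_nonneg hc0 (sub_nonneg.2 h2)]
  have hκ0 : 0 ≤ 1 - η / N := by
    rw [sub_nonneg, div_le_one hN0]; exact hηN
  obtain ⟨κ, hκ⟩ : ∃ κ : NNReal, (κ : ℝ) = 1 - η / N :=
    ⟨(1 - η / N).toNNReal, Real.coe_toNNReal _ hκ0⟩
  obtain ⟨p, hpc, hpT, hp1, hp2, hpd⟩ := exists_periodic_solution_along_flow (l := 1 / Q)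
    (u := 2 / b) (T := T) (κ := κ) hφ hVK hVT (H := fun t q => f t (cl q))
    (by
      have h1 : Continuous fun x : ℝ × ℝ => cl x.2 := hclc.comp continuous_snd
      exact h1.add ((((continuous_const.div h1 fun x => (hcl0 _).ne').sub
        (hβ.comp continuous_fst)).sub ((hg.comp continuous_fst).mul h1)).div_const N))
    (fun t q => hf1 t _ (hcl1 q) (hcl2 q)) (fun t q => hf2 t _ (hcl1 q) (hcl2 q))
    (by
      rw [← NNReal.coe_lt_coe, hκ, NNReal.coe_one]
      linarith [div_pos hη0 hN0])
    (fun t q r => by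
      obtain ⟨c, hc0, hc1, hc⟩ := hquot t (cl q) (cl r) (hcl1 q) (hcl2 q) (hcl1 r) (hcl2 r)
      rw [hκ, hc, abs_mul, abs_of_nonneg hc0]
      exact mul_le_mul hc1 (hclL q r) (abs_nonneg _) hκ0)
    (fun t q => by simp only [hf, hβT t, hgT t])
  have hclp : ∀ t, cl (p t) = p t := fun t => by
    simp only [hcl, min_eq_left (hp2 t), max_eq_right (hp1 t)]
  have hpd' : ∀ t, HasDerivAt (fun s => p (φ s t)) ((1 / p t - β t - g t * p t) / N) 0 := by
    intro t
    have := hpd t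
    simp only [hclp, hf, add_sub_cancel_left] at this
    exact this
  refine ⟨p, hpc, hpT, fun t => hQ'.trans_le (hp1 t), fun t ht => ?_, fun t ht => ?_⟩
  · have hV0 : V t = 0 := by simp [hV, ht]
    have hconst : (fun s => p (φ s t)) = fun _ => p t :=
      funext fun s => by rw [hφ.eq_self_of_zero hVK hV0]
    have h1 := hpd' t
    rw [hconst] at h1
    have h2 := h1.unique (hasDerivAt_const 0 (p t))
    simpa [hN0.ne'] using h2
  · have hV0 : V t ≠ 0 := div_ne_zero ht hN0.ne'
    refine (hasDerivAt_of_along_flow hφ (hA.continuous.div_const N) hV0 (hpd' t)).congr_deriv ?_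
    simp only [hV]
    field_simp

/-! ### The periodic solution -/

/-- Under assumption (H), the Abel equation (N): x·x′ = A(t) + B(t)·x + C(t)·x²
admits a C¹, T-periodic solution x* : ℝ → ℝ which has the sign of −A·B. -/
theorem abel_periodic_solution_exists
    (T : ℝ) (hT : 0 < T) (A B C : ℝ → ℝ)
    (hA : ContDiff ℝ 1 A) (hB : ContDiff ℝ 1 B) (hC : ContDiff ℝ 1 C)
    (hAper : Function.Periodic A T) (hBper : Function.Periodic B T)
    (hCper : Function.Periodic C T)
    (hzero : ∃ t ∈ Icc (0 : ℝ) T, A t = 0)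
    (hcond : (sInf ((fun t => |B t|) '' Icc (0 : ℝ) T)) ^ 2 >
      -4 * sInf ((fun t => deriv A t) '' Icc (0 : ℝ) T) *
        (1 + T * sSup ((fun t => |C t|) '' Icc (0 : ℝ) T))) :
    ∃ x : ℝ → ℝ, ContDiff ℝ 1 x ∧ Function.Periodic x T ∧
      (∀ t : ℝ, x t * deriv x t = A t + B t * x t + C t * x t ^ 2) ∧
      (∀ t : ℝ, 0 < A t * B t → x t < 0) ∧
      (∀ t : ℝ, A t * B t < 0 → 0 < x t) ∧
      (∀ t : ℝ, x t = 0 ↔ A t = 0) := by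
  set b := sInf ((fun t => |B t|) '' Icc (0 : ℝ) T) with hb
  set a := -sInf ((fun t => deriv A t) '' Icc (0 : ℝ) T) with ha
  set c := sSup ((fun t => |C t|) '' Icc (0 : ℝ) T) with hc
  have hdAc : Continuous (deriv A) := hA.continuous_deriv le_rfl
  have hdAT : Function.Periodic (deriv A) T := fun t => by
    rw [← deriv_comp_add_const, funext hAper]
  -- The extrema over one period bound the functions on the whole line.
  have hBb : ∀ t, b ≤ |B t| := fun t => by
    obtain ⟨y, hy, hty⟩ := hBper.exists_mem_Ico₀ hT t
    rw [hty]
    exact csInf_le (isCompact_Icc.image hB.continuous.abs).bddBelow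
      (mem_image_of_mem _ (Ico_subset_Icc_self hy))
  have hAa : ∀ t, -a ≤ deriv A t := fun t => by
    obtain ⟨y, hy, hty⟩ := hdAT.exists_mem_Ico₀ hT t
    rw [hty, ha, neg_neg]
    exact csInf_le (isCompact_Icc.image hdAc).bddBelow
      (mem_image_of_mem _ (Ico_subset_Icc_self hy))
  have hCc : ∀ t, |C t| ≤ c := fun t => by
    obtain ⟨y, hy, hty⟩ := hCper.exists_mem_Ico₀ hT t
    rw [hty]
    exact le_csSup (isCompact_Icc.image hC.continuous.abs).bddAbove
      (mem_image_of_mem _ (Ico_subset_Icc_self hy))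
  have ha0 : 0 ≤ a := by
    obtain ⟨ξ, -, hξ⟩ := exists_deriv_eq_zero hT hA.continuous.continuousOn
      (by simpa using (hAper 0).symm)
    linarith [hAa ξ]
  have hc0 : 0 ≤ c := (abs_nonneg _).trans (hCc 0)
  have hb0 : 0 ≤ b := Real.sInf_nonneg (by rintro _ ⟨t, -, rfl⟩; exact abs_nonneg _)
  have hm0 : 0 ≤ a * (1 + T * c) := by positivity
  have hm : 4 * (a * (1 + T * c)) < b ^ 2 := by
    have : -4 * sInf ((fun t => deriv A t) '' Icc (0 : ℝ) T) * (1 + T * c) =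
        4 * (a * (1 + T * c)) := by rw [ha]; ring
    linarith
  have hbpos : 0 < b := lt_of_le_of_ne hb0 fun h => by rw [← h] at hm; norm_num at hm; linarith
  have hslope : ∀ s t, s ≤ t → -a * (t - s) ≤ A t - A s := fun s t hst =>
    mul_sub_le_image_sub_of_le_deriv (hA.differentiable one_ne_zero) (fun t => hAa t) hst
  -- Every point has a zero of `A` within distance `T` on either side.
  have hAbound : ∀ t, |A t| ≤ a * T := by
    intro t
    obtain ⟨z, -, hz⟩ := hzero
    obtain ⟨y, hy, hzy⟩ := hAper.exists_mem_Ico hT z t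
    obtain ⟨y', hy', hzy'⟩ := hAper.exists_mem_Ico hT z (t - T)
    have h1 := hslope t y hy.1
    have h2 := hslope y' t (by linarith [hy'.2])
    have h3 : a * (y - t) ≤ a * T := mul_le_mul_of_nonneg_left (by linarith [hy.2]) ha0
    have h4 : a * (t - y') ≤ a * T := mul_le_mul_of_nonneg_left (by linarith [hy'.1]) ha0
    rw [abs_le]
    constructor <;> linarith
  have hgm : ∀ t, -(a * (1 + T * c)) ≤ deriv A t - C t * A t := by
    intro t
    have h1 : C t * A t ≤ c * (a * T) := by
      refine (le_abs_self _).trans ?_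
      rw [abs_mul]
      exact mul_le_mul (hCc t) (hAbound t) (abs_nonneg _) hc0
    linarith [hAa t]
  obtain ⟨p, hpc, hpT, hp0, hpz, hpd⟩ := exists_profile hT hA hAper hB.continuous.abs
    (β := fun t => |B t|) (fun t => by simp only [hBper t])
    (g := fun t => deriv A t - C t * A t) (hdAc.sub (hC.continuous.mul hA.continuous))
    (fun t => by simp only [hdAT t, hCper t, hAper t]) hbpos hm hBb hgm
  have hBne : ∀ t, B t ≠ 0 := fun t h => by
    have := hBb t
    rw [h, abs_zero] at this
    linarith
  obtain ⟨σ, hσ2, hσ⟩ : ∃ σ : ℝ, σ * σ = 1 ∧ ∀ t, |B t| = -σ * B t := by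
    have hsign : (∀ t, B t ≤ 0) ∨ ∀ t, 0 ≤ B t := by
      by_contra! h
      obtain ⟨⟨s, hs⟩, ⟨t, ht⟩⟩ := h
      obtain ⟨r, hr⟩ := mem_range_of_exists_le_of_exists_ge hB.continuous ⟨t, ht.le⟩ ⟨s, hs.le⟩
      exact hBne r hr
    rcases hsign with h | h
    · exact ⟨1, by norm_num, fun t => by rw [abs_of_nonpos (h t)]; ring⟩
    · exact ⟨-1, by norm_num, fun t => by rw [abs_of_nonneg (h t)]; ring⟩
  have hσ0 : σ ≠ 0 := fun h => by simp [h] at hσ2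
  have hAd : ∀ t, HasDerivAt A (deriv A t) t := fun t =>
    (hA.differentiable one_ne_zero t).hasDerivAt
  have hAp : ∀ t, HasDerivAt (fun t => A t * p t)
      (1 / p t - |B t| + C t * A t * p t) t := by
    intro t
    rcases eq_or_ne (A t) 0 with h0 | h0
    · -- At a zero of `A`, continuity of `p` suffices: the slope of `A p` is that of `A` times `p`.
      have hval : 1 / p t - |B t| + C t * A t * p t = deriv A t * p t := by
        have := hpz t h0
        rw [h0] at this ⊢
        linarith
      rw [hval, hasDerivAt_iff_tendsto_slope]
      have hs := ((hasDerivAt_iff_tendsto_slope.1 (hAd t))).mul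
        (hpc.continuousAt.tendsto.mono_left (nhdsWithin_le_nhds (s := {t}ᶜ)))
      refine hs.congr fun y => ?_
      simp only [slope_def_field, h0]
      ring
    · refine ((hAd t).mul (hpd t h0)).congr_deriv ?_
      have := (hp0 t).ne'
      field_simp
      ring
  have hx : ∀ t, HasDerivAt (fun t => σ * (A t * p t))
      (σ * (1 / p t - |B t| + C t * A t * p t)) t := fun t => (hAp t).const_mul σ
  refine ⟨fun t => σ * (A t * p t), ?_, fun t => by simp only [hAper t, hpT t], fun t => ?_,
    fun t ht => ?_, fun t ht => ?_, fun t => ?_⟩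
  · refine contDiff_one_iff_deriv.2 ⟨fun t => (hx t).differentiableAt, ?_⟩
    rw [funext fun t => (hx t).deriv]
    exact continuous_const.mul (((continuous_const.div hpc fun t => (hp0 t).ne').sub
      hB.continuous.abs).add ((hC.continuous.mul hA.continuous).mul hpc))
  · rw [(hx t).deriv, hσ]
    have hp := (hp0 t).ne'
    field_simp
    linear_combination (A t - A t * p t * (-σ * B t)) * hσ2
  · have h1 : 0 < |B t| * |A t| ^ 2 * p t := by
      have := hp0 t
      have h2 : A t ≠ 0 := left_ne_zero_of_mul ht.ne'
      have h3 := hBne t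
      positivity
    have h4 : σ * (A t * p t) * (A t * B t) = -(|B t| * |A t| ^ 2 * p t) := by
      rw [sq_abs, hσ]; ring
    by_contra! h
    linarith [mul_nonneg h ht.le]
  · have h1 : 0 < |B t| * |A t| ^ 2 * p t := by
      have := hp0 t
      have h2 : A t ≠ 0 := left_ne_zero_of_mul ht.ne
      have h3 := hBne t
      positivity
    have h4 : σ * (A t * p t) * (A t * B t) = -(|B t| * |A t| ^ 2 * p t) := by
      rw [sq_abs, hσ]; ring
    by_contra! h
    linarith [mul_nonneg_of_nonpos_of_nonpos h ht.le]
  · simp [hσ0, (hp0 t).ne']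
end

section
/- Let S: ℝ × ℝ → ℝ, let m, n ∈ ℝ, and let t₁ < t₂ be real numbers. Let I be an interval containing t₁ and let x: I → ℝ be differentiable with x(t) ≠ 0 and x′(t) = S(t, x(t)) for all t ∈ I. Assume that S(t, m·t + n) > m for every t ∈ [t₁, t₂) with m·t + n ≠ 0, and that x(t₁) ≥ m·t₁ + n. Then x(t) > m·t + n for all t ∈ (t₁, t₂) ∩ I. -/
/-!
Fencing argument. At any time in `[t₁, t₂)` where the solution meets the line, the common value is
nonzero, so the solution's slope there exceeds `m`. By the one-sided boundary comparison principle
`image_le_of_deriv_right_lt_deriv_boundary'` the solution stays weakly above the line. A contact at a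
time `t > t₁` is then impossible: as `x - (m t + n)` has positive derivative at its zero `t`, it
would be negative just to the left of `t`.
-/

open Set Filter Topology

/-- comparison lemma (Lemma 1.i): a solution of x′ = S(t,x) starting on or above
the line x = m·t + n stays strictly above it on (t₁,t₂), provided S > m on the line there. -/
theorem solution_stays_above_line
    (S : ℝ → ℝ → ℝ) (m n t₁ t₂ : ℝ) (ht : t₁ < t₂)
    (I : Set ℝ) (hI : I.OrdConnected) (ht₁I : t₁ ∈ I)
    (x : ℝ → ℝ)
    (hx : ∀ t ∈ I, x t ≠ 0 ∧ HasDerivWithinAt x (S t (x t)) I t)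
    (hS : ∀ t ∈ Ico t₁ t₂, m * t + n ≠ 0 → m < S t (m * t + n))
    (hinit : m * t₁ + n ≤ x t₁) :
    ∀ t ∈ Ioo t₁ t₂ ∩ I, m * t + n < x t := by
  rintro t ⟨⟨h1, h2⟩, htI⟩
  have hsub : Icc t₁ t ⊆ I := hI.out ht₁I htI
  have hd : ∀ s ∈ Icc t₁ t, HasDerivWithinAt x (S s (x s)) (Icc t₁ t) s :=
    fun s hs => (hx s (hsub hs)).2.mono hsub
  have hline : ∀ s : ℝ, HasDerivAt (fun s => m * s + n) m s := fun s => by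
    simpa using ((hasDerivAt_id s).const_mul m).add_const n
  have hcontact : ∀ s ∈ Ico t₁ t₂, s ∈ I → m * s + n = x s → m < S s (x s) := by
    intro s hs hsI h
    rw [← h]
    exact hS s hs (h ▸ (hx s hsI).1)
  have hle : ∀ s ∈ Icc t₁ t, m * s + n ≤ x s := fun s hs =>
    image_le_of_deriv_right_lt_deriv_boundary' (f := fun s => m * s + n) (f' := fun _ => m)
      (fun r _ => (hline r).continuousAt.continuousWithinAt)
      (fun r _ => (hline r).hasDerivWithinAt) hinit
      (fun r hr => (hd r hr).continuousWithinAt)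
      (fun r hr => (hd r ⟨hr.1, hr.2.le⟩).mono_of_mem_nhdsWithin
        (mem_of_superset (Icc_mem_nhdsGE hr.2) (Icc_subset_Icc_left hr.1)))
      (fun r hr => hcontact r ⟨hr.1, hr.2.trans h2⟩ (hsub ⟨hr.1, hr.2.le⟩)) hs
  refine lt_of_le_of_ne (hle t ⟨h1.le, le_rfl⟩) fun heq => ?_
  have hlt := hcontact t ⟨h1.le, h2⟩ htI heq
  have hg : HasDerivWithinAt (fun s => x s - (m * s + n)) (S t (x t) - m) (Iio t) t :=
    ((hd t ⟨h1.le, le_rfl⟩).mono_of_mem_nhdsWithin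
      (mem_of_superset (Ioo_mem_nhdsLT h1) Ioo_subset_Icc_self)).sub (hline t).hasDerivWithinAt
  have hslope := (hasDerivWithinAt_iff_tendsto_slope' self_notMem_Iio).1 hg
  obtain ⟨s, hpos, hs⟩ :=
    ((hslope.eventually_const_lt (sub_pos.2 hlt)).and (Ioo_mem_nhdsLT h1)).exists
  -- Left of the contact time, nonnegativity of the gap forces a nonpositive difference quotient.
  rw [slope_def_field, heq, sub_self, sub_zero] at hpos
  exact absurd hpos (not_lt.2 (div_nonpos_of_nonneg_of_nonpos
    (sub_nonneg.2 (hle s ⟨hs.1.le, hs.2.le⟩)) (sub_nonpos.2 hs.2.le)))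
end

section
/- Let S: ℝ × ℝ → ℝ, let m, n ∈ ℝ, and let t₁ < t₂ be real numbers. Let I be an interval containing t₁ and let x: I → ℝ be differentiable with x(t) ≠ 0 and x′(t) = S(t, x(t)) for all t ∈ I. Assume that S(t, m·t + n) < m for every t ∈ [t₁, t₂) with m·t + n ≠ 0, and that x(t₁) ≤ m·t₁ + n. Then x(t) < m·t + n for all t ∈ (t₁, t₂) ∩ I. -/
/-!
Up to a time `t < t₂` in `I` the solution can only touch the line with slope `S < m`, so the fencing
lemma `image_le_of_deriv_right_lt_deriv_boundary` gives the weak inequality on `[t₁, t]`.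
Equality at `t` is excluded by the left derivative there: it is smaller than `m`, so the
solution would lie strictly above the line immediately to the left of `t`.
-/

open Set Filter Topology

/-- comparison lemma (Lemma 1.ii): a solution of x′ = S(t,x) starting on or below
the line x = m·t + n stays strictly below it on (t₁,t₂), provided S < m on the line there. -/
theorem solution_stays_below_line
    (S : ℝ → ℝ → ℝ) (m n t₁ t₂ : ℝ) (ht : t₁ < t₂)
    (I : Set ℝ) (hI : I.OrdConnected) (ht₁I : t₁ ∈ I)
    (x : ℝ → ℝ)
    (hx : ∀ t ∈ I, x t ≠ 0 ∧ HasDerivWithinAt x (S t (x t)) I t)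
    (hS : ∀ t ∈ Ico t₁ t₂, m * t + n ≠ 0 → S t (m * t + n) < m)
    (hinit : x t₁ ≤ m * t₁ + n) :
    ∀ t ∈ Ioo t₁ t₂ ∩ I, x t < m * t + n := by
  rintro t ⟨⟨h1, h2⟩, htI⟩
  have hsub : Icc t₁ t ⊆ I := hI.out ht₁I htI
  -- Where the solution meets the line, the line is nonzero because the solution is.
  have key : ∀ s ∈ Icc t₁ t, x s = m * s + n → S s (x s) < m := by
    intro s hs he
    rw [he]
    exact hS s ⟨hs.1, hs.2.trans_lt h2⟩ (he ▸ (hx s (hsub hs)).1)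
  have hB : ∀ s : ℝ, HasDerivAt (fun s => m * s + n) m s := fun s => by
    simpa using ((hasDerivAt_id s).const_mul m).add_const n
  have hle : ∀ ⦃s⦄, s ∈ Icc t₁ t → x s ≤ m * s + n := by
    refine image_le_of_deriv_right_lt_deriv_boundary (f' := fun s => S s (x s))
      (B := fun s => m * s + n) (B' := fun _ => m)
      (fun s hs => ((hx s (hsub hs)).2.mono hsub).continuousWithinAt)
      (fun s hs => ?_) hinit hB (fun s hs he => key s ⟨hs.1, hs.2.le⟩ he)
    have hd := (hx s (hsub ⟨hs.1, hs.2.le⟩)).2.mono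
      ((Icc_subset_Icc_left hs.1).trans hsub)
    exact hd.mono_of_mem_nhdsWithin (Icc_mem_nhdsGE hs.2)
  refine lt_of_le_of_ne (hle ⟨h1.le, le_rfl⟩) fun he => ?_
  -- A contact at `t` with slope below `m` would put the solution above the line just before `t`.
  have hd : HasDerivWithinAt x (S t (x t)) (Ico t₁ t) t :=
    (hx t htI).2.mono (Ico_subset_Icc_self.trans hsub)
  have hev := hd.limsup_slope_le' (fun h => lt_irrefl _ h.2) (key t ⟨h1.le, le_rfl⟩ he)
  haveI : (𝓝[Ico t₁ t] t).NeBot := by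
    rw [nhdsWithin_Ico_eq_nhdsLT h1]
    infer_instance
  obtain ⟨z, hz, hzt⟩ := (hev.and self_mem_nhdsWithin).exists
  have hzle := hle ⟨hzt.1, hzt.2.le⟩
  rw [slope_def_field, div_lt_iff_of_neg (sub_neg.2 hzt.2)] at hz
  linarith
end

section
/- Let T > 0 and let A: ℝ → ℝ be a C¹, T-periodic function having at least one zero. Then −T·(min_{t∈[0,T]} A′(t)) ≥ max_{t∈[0,T]} |A(t)|. -/
open Set Filter Topology

/-!
Let `m` be the minimum of `A'` on a period; by periodicity `m ≤ A'` everywhere, and the mean value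
inequality over a full period gives `m ≤ 0`. Every `t` has a zero `s` of `A` with `t ≤ s < t + T`,
and then `s - T < t` is a zero too. The mean value inequality on `[t, s]` bounds `A t` above by
`-m T`, and on `[s - T, t]` it bounds `A t` below by `m T`.
-/

/-- if A is C¹, T-periodic and has a zero, then
−T·(min_{[0,T]} A′) ≥ max_{[0,T]} |A|. -/
theorem periodic_with_zero_bound
    (T : ℝ) (hT : 0 < T) (A : ℝ → ℝ) (hA : ContDiff ℝ 1 A)
    (hAper : Function.Periodic A T) (hzero : ∃ t₀ : ℝ, A t₀ = 0) :
    -T * sInf ((fun t => deriv A t) '' Icc (0 : ℝ) T) ≥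
      sSup ((fun t => |A t|) '' Icc (0 : ℝ) T) := by
  obtain ⟨t₀, ht₀⟩ := hzero
  have hper' : Function.Periodic (deriv A) T := fun x => by
    rw [← deriv_comp_add_const, funext hAper]
  have hbdd : BddBelow ((fun t => deriv A t) '' Icc (0 : ℝ) T) :=
    (isCompact_Icc.image (hA.continuous_deriv le_rfl)).bddBelow
  set m := sInf ((fun t => deriv A t) '' Icc (0 : ℝ) T)
  have hm : ∀ x, m ≤ deriv A x := fun x => by
    obtain ⟨y, hy, hxy⟩ := hper'.exists_mem_Ico₀ hT x
    rw [hxy]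
    exact csInf_le hbdd ⟨y, Ico_subset_Icc_self hy, rfl⟩
  have hmvt : ∀ ⦃x y⦄, x ≤ y → m * (y - x) ≤ A y - A x := fun x y hxy =>
    mul_sub_le_image_sub_of_le_deriv (hA.differentiable one_ne_zero) hm hxy
  have hm0 : m ≤ 0 := by
    have h := hmvt hT.le
    have h0 : A T = A 0 := by simpa using hAper 0
    rw [h0, sub_zero, sub_self] at h
    exact nonpos_of_mul_nonpos_left h hT
  refine csSup_le ((nonempty_Icc.2 hT.le).image _) ?_
  rintro _ ⟨t, -, rfl⟩
  obtain ⟨s, hs, hs0⟩ := hAper.exists_mem_Ico hT t₀ t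
  have hsT : A (s - T) = 0 := by rw [hAper.sub_eq, ← hs0, ht₀]
  have h1 := hmvt hs.1
  have h2 := hmvt (show s - T ≤ t by linarith [hs.2])
  rw [← hs0, ht₀] at h1
  rw [hsT] at h2
  refine abs_le.2 ⟨?_, ?_⟩
  · nlinarith [mul_nonneg (neg_nonneg.2 hm0) (sub_nonneg.2 hs.1)]
  · nlinarith [mul_nonneg (neg_nonneg.2 hm0) (sub_nonneg.2 hs.2.le)]
end

section
/- Under assumption (H), one has the inequality (min_{t∈[0,T]} |B(t)|)² > 2·(max_{t∈[0,T]} |A(t)|)·(max_{t∈[0,T]} |C(t)|). -/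
/-!
Let `m` be the minimum of the derivative of `A`. Integrating this lower bound from a zero `t₀` of `A` to a point `t`, and from `t` to the
next zero `t₀ + T` (or the previous one), bounds `A t` on both sides, so `max |A| ≤ -m * T`; also
`m ≤ 0` because `A 0 = A T`. Hence
`2 * max |A| * max |C| ≤ -2 * m * T * max |C| ≤ -4 * m * (1 + T * max |C|)`,
and the right-hand side is below `(min |B|)²` by assumption.
-/

open Set Filter Topology

/-- under assumption (H),
(min |B|)² > 2·(max |A|)·(max |C|). -/
theorem min_B_sq_gt_two_maxA_maxC
    (T : ℝ) (hT : 0 < T) (A B C : ℝ → ℝ)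
    (hA : ContDiff ℝ 1 A) (hB : ContDiff ℝ 1 B) (hC : ContDiff ℝ 1 C)
    (hAper : Function.Periodic A T) (hBper : Function.Periodic B T)
    (hCper : Function.Periodic C T)
    (hzero : ∃ t ∈ Icc (0 : ℝ) T, A t = 0)
    (hcond : (sInf ((fun t => |B t|) '' Icc (0 : ℝ) T)) ^ 2 >
      -4 * sInf ((fun t => deriv A t) '' Icc (0 : ℝ) T) *
        (1 + T * sSup ((fun t => |C t|) '' Icc (0 : ℝ) T))) :
    (sInf ((fun t => |B t|) '' Icc (0 : ℝ) T)) ^ 2 >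
      2 * sSup ((fun t => |A t|) '' Icc (0 : ℝ) T) *
        sSup ((fun t => |C t|) '' Icc (0 : ℝ) T) := by
  obtain ⟨t₀, ⟨h0, h0T⟩, hAt₀⟩ := hzero
  set m := sInf ((fun t => deriv A t) '' Icc (0 : ℝ) T) with hm
  set c := sSup ((fun t => |C t|) '' Icc (0 : ℝ) T) with hc
  have hdiff : Differentiable ℝ A := hA.differentiable one_ne_zero
  have hder : ∀ t ∈ Icc (0 : ℝ) T, m ≤ deriv A t := fun t ht =>
    csInf_le (isCompact_Icc.image (hA.continuous_deriv le_rfl)).bddBelow ⟨t, ht, rfl⟩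
  have hinc : ∀ s ∈ Icc (0 : ℝ) T, ∀ t ∈ Icc (0 : ℝ) T, s ≤ t → m * (t - s) ≤ A t - A s :=
    (convex_Icc 0 T).mul_sub_le_image_sub_of_le_deriv hdiff.continuous.continuousOn
      hdiff.differentiableOn (fun t ht => hder t (interior_subset ht))
  have hper : A T = A 0 := by simpa using hAper 0
  have mem0 : (0 : ℝ) ∈ Icc (0 : ℝ) T := ⟨le_rfl, hT.le⟩
  have memT : T ∈ Icc (0 : ℝ) T := ⟨hT.le, le_rfl⟩
  have hm0 : m ≤ 0 := by
    have := hinc 0 mem0 T memT hT.le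
    nlinarith
  have hAbound : ∀ t ∈ Icc (0 : ℝ) T, |A t| ≤ -m * T := by
    intro t ht
    have hl := hinc 0 mem0 t ht ht.1
    have hr := hinc t ht T memT ht.2
    have hl₀ := hinc 0 mem0 t₀ ⟨h0, h0T⟩ h0
    have hr₀ := hinc t₀ ⟨h0, h0T⟩ T memT h0T
    -- One bound comes from the segment between `t₀` and `t`; the other from its complement in
    -- `[0, T]`, whose two pieces are glued by `A T = A 0`.
    rcases le_total t₀ t with h | h
    · have hd := hinc t₀ ⟨h0, h0T⟩ t ht h
      have := mul_nonneg_of_nonpos_of_nonpos hm0 (by linarith [ht.2] : t - t₀ - T ≤ 0)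
      have := mul_nonneg_of_nonpos_of_nonpos hm0 (by linarith : t₀ - t ≤ 0)
      rw [abs_le]
      constructor <;> linarith
    · have hd := hinc t ht t₀ ⟨h0, h0T⟩ h
      have := mul_nonneg_of_nonpos_of_nonpos hm0 (by linarith [ht.1] : t₀ - t - T ≤ 0)
      have := mul_nonneg_of_nonpos_of_nonpos hm0 (by linarith : t - t₀ ≤ 0)
      rw [abs_le]
      constructor <;> linarith
  have hsup : sSup ((fun t => |A t|) '' Icc (0 : ℝ) T) ≤ -m * T := by
    apply csSup_le (Set.Nonempty.image _ ⟨0, mem0⟩)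
    rintro _ ⟨t, ht, rfl⟩
    exact hAbound t ht
  have hc0 : 0 ≤ c := by
    apply Real.sSup_nonneg
    rintro _ ⟨t, -, rfl⟩
    exact abs_nonneg _
  have h1 := mul_le_mul_of_nonneg_right hsup hc0
  have h2 : 0 ≤ -m * (T * c) := mul_nonneg (by linarith) (mul_nonneg hT.le hc0)
  linarith
end

section
/- Assume (H) and that B(t) > 0 for all t. Let a < b be real numbers with A(a) = A(b) = 0 and A(t) > 0 for all t ∈ (a, b). Let x be a solution of (N) on [t₁, t₂) with a ≤ t₁ < t₂ ≤ b and x(t) < 0 for all t ∈ [t₁, t₂). Then there exists a solution x̃ of (N) on [t₁, b) with x̃(t) < 0 for all t ∈ [t₁, b) and x̃(t) = x(t) for all t ∈ [t₁, t₂). -/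
/-!
Write `E t = exp (∫₀ᵗ C)` and `x = E z`. The equation for a negative solution, `x' = A / x + B + C x`,
becomes `z' = P / z + Q` with `P = A / E²` and `Q = B / E`, so the linear term disappears.

On a compact interval `[s, c]` on which `P > 0`, replace the right-hand side by
`P / min z (-ε) + Q`, which is bounded and globally Lipschitz in `z`; Picard–Lindelöf on a large
enough ball then gives a solution on all of `[s, c]` at once. If `ε` is small, the field is
negative at the level `-ε`, so a solution starting at or below `-ε` stays there and hence solves
the original equation (`exists_solution_Icc`). Negative solutions are unique
(`solution_unique`), because on a compact interval they stay away from `0`, where the field is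
Lipschitz. Letting `c` increase to `b` gives a negative solution on `[s, b)`
(`exists_solution_Ico`).

The given solution is restarted at a point `s` of `(t₁, t₂)`, where `A > 0` (at `t₁` itself `A` may
vanish), and by uniqueness the new solution agrees with the old one on `[s, t₂)`.
-/

open Set Filter Topology

/-- Lipschitz estimate for `p ↦ m / p + q` away from `0`. -/
lemma field_dist_le {ε M m q p r : ℝ} (hε : 0 < ε) (hm : |m| ≤ M) (hp : p ≤ -ε) (hr : r ≤ -ε) :
    |(m / p + q) - (m / r + q)| ≤ M / ε ^ 2 * |p - r| := by
  have hp0 : p < 0 := by linarith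
  have hr0 : r < 0 := by linarith
  have hpr : ε ^ 2 ≤ p * r := by nlinarith
  have h1 : (m / p + q) - (m / r + q) = m * (r - p) / (p * r) := by
    field_simp [hp0.ne, hr0.ne]
    ring
  have hpos : 0 < ε ^ 2 := by positivity
  rw [h1, abs_div, abs_mul, abs_of_pos (by linarith : 0 < p * r), abs_sub_comm r p,
    div_mul_eq_mul_div]
  gcongr
  exact mul_nonneg ((abs_nonneg m).trans hm) (abs_nonneg _)

lemma exists_abs_bound {P : ℝ → ℝ} (hP : Continuous P) (s c : ℝ) :
    ∃ M, 0 < M ∧ ∀ t ∈ Icc s c, |P t| ≤ M := by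
  obtain ⟨M, hM⟩ := (isCompact_Icc (a := s) (b := c)).exists_bound_of_continuousOn hP.continuousOn
  exact ⟨max M 1, by positivity, fun t ht => (hM t ht).trans (le_max_left _ _)⟩

/-- A solution on a closed interval has the right derivatives required by the Grönwall-type
results. -/
lemma hasDerivWithinAt_Ici_of_Icc {f : ℝ → ℝ} {f' s c t : ℝ}
    (h : HasDerivWithinAt f f' (Icc s c) t) (ht : t ∈ Ico s c) :
    HasDerivWithinAt f f' (Ici t) t :=
  h.mono_of_mem_nhdsWithin
    (mem_of_superset (Icc_mem_nhdsGE ht.2) (Icc_subset_Icc ht.1 le_rfl))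

lemma exists_neg_bound {y : ℝ → ℝ} {s c : ℝ} (hsc : s ≤ c) (hy : ContinuousOn y (Icc s c))
    (hneg : ∀ t ∈ Icc s c, y t < 0) : ∃ ε, 0 < ε ∧ ∀ t ∈ Icc s c, y t ≤ -ε := by
  obtain ⟨m, hm, hmax⟩ := isCompact_Icc.exists_isMaxOn (nonempty_Icc.2 hsc) hy
  exact ⟨-y m, neg_pos.2 (hneg m hm), fun t ht => by simpa using hmax ht⟩

/-- Negative solutions of `z' = P / z + Q` are determined by their initial value. -/
lemma solution_unique {P Q y z : ℝ → ℝ} (hP : Continuous P) {s c : ℝ} (hsc : s ≤ c)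
    (hy : ∀ t ∈ Icc s c, y t < 0 ∧ HasDerivWithinAt y (P t / y t + Q t) (Icc s c) t)
    (hz : ∀ t ∈ Icc s c, z t < 0 ∧ HasDerivWithinAt z (P t / z t + Q t) (Icc s c) t)
    (h0 : y s = z s) : EqOn y z (Icc s c) := by
  have hyc : ContinuousOn y (Icc s c) := fun t ht => (hy t ht).2.continuousWithinAt
  have hzc : ContinuousOn z (Icc s c) := fun t ht => (hz t ht).2.continuousWithinAt
  obtain ⟨M, hM0, hM⟩ := exists_abs_bound hP s c
  obtain ⟨ε₁, hε₁, hb₁⟩ := exists_neg_bound hsc hyc fun t ht => (hy t ht).1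
  obtain ⟨ε₂, hε₂, hb₂⟩ := exists_neg_bound hsc hzc fun t ht => (hz t ht).1
  have hε : 0 < min ε₁ ε₂ := lt_min hε₁ hε₂
  refine ODE_solution_unique_of_mem_Icc_right (v := fun t x => P t / x + Q t)
    (s := fun _ => Iic (-min ε₁ ε₂)) (K := (M / (min ε₁ ε₂) ^ 2).toNNReal) ?_ hyc ?_ ?_ hzc ?_ ?_ h0
  · intro t ht
    refine LipschitzOnWith.of_dist_le_mul fun p hp r hr => ?_
    rw [Real.coe_toNNReal _ (by positivity)]
    exact field_dist_le hε (hM t (Ico_subset_Icc_self ht)) hp hr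
  · exact fun t ht => hasDerivWithinAt_Ici_of_Icc (hy t (Ico_subset_Icc_self ht)).2 ht
  · exact fun t ht => (hb₁ t (Ico_subset_Icc_self ht)).trans (neg_le_neg (min_le_left _ _))
  · exact fun t ht => hasDerivWithinAt_Ici_of_Icc (hz t (Ico_subset_Icc_self ht)).2 ht
  · exact fun t ht => (hb₂ t (Ico_subset_Icc_self ht)).trans (neg_le_neg (min_le_right _ _))

/-- Negative solutions of `z' = P / z + Q` exist on any compact interval on which `P > 0`: the
singular term repels them from `0`. -/
lemma exists_solution_Icc {P Q : ℝ → ℝ} (hP : Continuous P) (hQ : Continuous Q) {s c : ℝ}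
    (hsc : s ≤ c) (hpos : ∀ t ∈ Icc s c, 0 < P t) {z₀ : ℝ} (hz₀ : z₀ < 0) :
    ∃ z : ℝ → ℝ, z s = z₀ ∧
      ∀ t ∈ Icc s c, z t < 0 ∧ HasDerivWithinAt z (P t / z t + Q t) (Icc s c) t := by
  obtain ⟨M, hM0, hM⟩ := exists_abs_bound hP s c
  obtain ⟨N, hN0, hN⟩ := exists_abs_bound hQ s c
  obtain ⟨m, hm, hmin⟩ := isCompact_Icc.exists_isMinOn (nonempty_Icc.2 hsc) hP.continuousOn
  have hα : 0 < P m := hpos m hm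
  -- The second bound makes `P / (-ε) + Q` negative on `[s, c]`.
  set ε := min (-z₀) (P m / (2 * N)) with hεdef
  have hε : 0 < ε := lt_min (by linarith) (by positivity)
  have hε₁ : ε ≤ -z₀ := min_le_left _ _
  have hε₂ : ε ≤ P m / (2 * N) := min_le_right _ _
  let f : ℝ → ℝ → ℝ := fun t x => P t / min x (-ε) + Q t
  have hpl : IsPicardLindelof f (⟨s, left_mem_Icc.2 hsc⟩ : Icc s c) z₀
      ((M / ε + N) * (c - s)).toNNReal 0 (M / ε + N).toNNReal (M / ε ^ 2).toNNReal := by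
    have hL : 0 ≤ M / ε + N := by positivity
    have hcs : 0 ≤ c - s := by linarith
    refine ⟨fun t ht => ?_, fun x _ => ?_, fun t ht x _ => ?_, ?_⟩
    · refine LipschitzOnWith.of_dist_le_mul fun p _ r _ => ?_
      rw [Real.coe_toNNReal _ (by positivity)]
      refine (field_dist_le hε (hM t ht) (min_le_right _ _) (min_le_right _ _)).trans ?_
      have hmm : |min p (-ε) - min r (-ε)| ≤ |p - r| := by
        simpa using abs_min_sub_min_le_max p (-ε) r (-ε)
      rw [Real.dist_eq]
      gcongr
    · exact ((hP.div_const _).add hQ).continuousOn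
    · rw [Real.coe_toNNReal _ hL, Real.norm_eq_abs]
      have hx : ε ≤ |min x (-ε)| := by
        have := min_le_right x (-ε)
        rw [abs_of_nonpos (by linarith)]
        linarith
      refine (abs_add_le _ _).trans (add_le_add ?_ (hN t ht))
      rw [abs_div]
      gcongr
      exact hM t ht
    · rw [Real.coe_toNNReal _ hL, Real.coe_toNNReal _ (mul_nonneg hL hcs)]
      simp [hcs]
  obtain ⟨z, hzs, hz⟩ := hpl.exists_eq_forall_mem_Icc_hasDerivWithinAt₀
  have hzc : ContinuousOn z (Icc s c) := fun t ht => (hz t ht).continuousWithinAt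
  have hbar : ∀ ⦃t⦄, t ∈ Icc s c → z t ≤ -ε := by
    refine image_le_of_deriv_right_lt_deriv_boundary' (B := fun _ => -ε) (B' := fun _ => 0) hzc
      (fun t ht => hasDerivWithinAt_Ici_of_Icc (hz t (Ico_subset_Icc_self ht)) ht) ?_
      continuousOn_const (fun t _ => hasDerivWithinAt_const _ _ _) ?_
    · have : z s = z₀ := hzs
      linarith
    · intro t ht hzt
      have ht' := Ico_subset_Icc_self ht
      have h1 : P m ≤ P t := hmin ht'
      have h2 : Q t ≤ N := (le_abs_self _).trans (hN t ht')
      have h3 : 2 * N ≤ P t / ε := by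
        rw [le_div_iff₀ hε]
        rw [le_div_iff₀ (by positivity)] at hε₂
        linarith
      simp only [f, hzt, min_self, div_neg]
      linarith
  refine ⟨z, hzs, fun t ht => ⟨by linarith [hbar ht], ?_⟩⟩
  have := hz t ht
  simpa only [f, min_eq_left (hbar ht)] using this

/-- Half-open version of `exists_solution_Icc`, where `P` is allowed to vanish at `b`. -/
lemma exists_solution_Ico {P Q : ℝ → ℝ} (hP : Continuous P) (hQ : Continuous Q) {s b : ℝ}
    (hpos : ∀ t ∈ Ico s b, 0 < P t) {z₀ : ℝ} (hz₀ : z₀ < 0) (hsb : s < b) :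
    ∃ z : ℝ → ℝ, z s = z₀ ∧
      ∀ t ∈ Ico s b, z t < 0 ∧ HasDerivWithinAt z (P t / z t + Q t) (Ico s b) t := by
  have hex : ∀ u : ℝ, ∃ z : ℝ → ℝ, u ∈ Ico s b → z s = z₀ ∧ ∀ t ∈ Icc s ((u + b) / 2),
      z t < 0 ∧ HasDerivWithinAt z (P t / z t + Q t) (Icc s ((u + b) / 2)) t := by
    intro u
    by_cases hu : u ∈ Ico s b
    · obtain ⟨z, hz⟩ := exists_solution_Icc (c := (u + b) / 2) hP hQ (by linarith [hu.1, hu.2])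
        (fun t ht => hpos t ⟨ht.1, by linarith [ht.2, hu.2]⟩) hz₀
      exact ⟨z, fun _ => hz⟩
    · exact ⟨fun _ => 0, fun h => absurd h hu⟩
  choose Y hY using hex
  -- The diagonal `u ↦ Y u u` coincides with each `Y t` on `[s, (t + b) / 2]`, by uniqueness.
  have hagree : ∀ t ∈ Ico s b, ∀ u ∈ Icc s ((t + b) / 2), Y u u = Y t u := by
    intro t ht u hu
    have hu' : u ∈ Ico s b := ⟨hu.1, by linarith [hu.2, ht.2]⟩
    obtain ⟨hu0, hus⟩ := hY u hu'
    obtain ⟨ht0, hts⟩ := hY t ht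
    have hsub₁ : Icc s u ⊆ Icc s ((u + b) / 2) := Icc_subset_Icc le_rfl (by linarith [hu'.2])
    have hsub₂ : Icc s u ⊆ Icc s ((t + b) / 2) := Icc_subset_Icc le_rfl hu.2
    exact solution_unique hP hu.1
      (fun r hr => ⟨(hus r (hsub₁ hr)).1, (hus r (hsub₁ hr)).2.mono hsub₁⟩)
      (fun r hr => ⟨(hts r (hsub₂ hr)).1, (hts r (hsub₂ hr)).2.mono hsub₂⟩)
      (hu0.trans ht0.symm) (right_mem_Icc.2 hu.1)
  refine ⟨fun u => Y u u, (hY s ⟨le_rfl, hsb⟩).1, fun t ht => ?_⟩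
  have htm : t < (t + b) / 2 := by linarith [ht.2]
  have htI : t ∈ Icc s ((t + b) / 2) := ⟨ht.1, htm.le⟩
  obtain ⟨-, hts⟩ := hY t ht
  have hnhds : Icc s ((t + b) / 2) ∈ 𝓝[Ico s b] t := by
    filter_upwards [self_mem_nhdsWithin, mem_nhdsWithin_of_mem_nhds (Iio_mem_nhds htm)]
      with r hr hr'
    exact ⟨hr.1, le_of_lt hr'⟩
  refine ⟨(hts t htI).1, ((hts t htI).2.mono_of_mem_nhdsWithin hnhds).congr_of_eventuallyEq ?_ rfl⟩
  filter_upwards [hnhds] with r hr using hagree t ht r hr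

/-- The extension theorem for the reduced equation `z' = P / z + Q`. -/
lemma extend_reduced {P Q : ℝ → ℝ} (hP : Continuous P) (hQ : Continuous Q) {t₁ t₂ b : ℝ}
    (h12 : t₁ < t₂) (h2b : t₂ ≤ b) (hpos : ∀ t ∈ Ioo t₁ b, 0 < P t) {x : ℝ → ℝ}
    (hx : ∀ t ∈ Ico t₁ t₂, x t < 0 ∧ HasDerivWithinAt x (P t / x t + Q t) (Ico t₁ t₂) t) :
    ∃ y : ℝ → ℝ, (∀ t ∈ Ico t₁ b, y t < 0 ∧
        HasDerivWithinAt y (P t / y t + Q t) (Ico t₁ b) t) ∧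
      ∀ t ∈ Ico t₁ t₂, y t = x t := by
  obtain ⟨s, hs1, hs2⟩ := exists_between h12
  obtain ⟨z, hzs, hz⟩ := exists_solution_Ico hP hQ
    (fun t ht => hpos t ⟨hs1.trans_le ht.1, ht.2⟩) (hx s ⟨hs1.le, hs2⟩).1 (hs2.trans_le h2b)
  have hzx : ∀ t ∈ Ico s t₂, z t = x t := by
    intro t ht
    have hsub₁ : Icc s t ⊆ Ico s b := fun r hr => ⟨hr.1, by linarith [hr.2, ht.2]⟩
    have hsub₂ : Icc s t ⊆ Ico t₁ t₂ := fun r hr => ⟨hs1.le.trans hr.1, hr.2.trans_lt ht.2⟩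
    exact solution_unique hP ht.1
      (fun r hr => ⟨(hz r (hsub₁ hr)).1, (hz r (hsub₁ hr)).2.mono hsub₁⟩)
      (fun r hr => ⟨(hx r (hsub₂ hr)).1, (hx r (hsub₂ hr)).2.mono hsub₂⟩)
      hzs (right_mem_Icc.2 ht.1)
  let y : ℝ → ℝ := fun t => if t < s then x t else z t
  have hyx : ∀ t ∈ Ico t₁ t₂, y t = x t := by
    intro t ht
    by_cases h : t < s
    · simp [y, h]
    · simpa [y, h] using hzx t ⟨not_lt.1 h, ht.2⟩
  have hyz : ∀ t, s ≤ t → y t = z t := fun t ht => if_neg (not_lt.2 ht)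
  refine ⟨y, fun t ht => ?_, hyx⟩
  by_cases h : t < t₂
  · have ht' : t ∈ Ico t₁ t₂ := ⟨ht.1, h⟩
    have hn : Ico t₁ t₂ ∈ 𝓝[Ico t₁ b] t := by
      filter_upwards [self_mem_nhdsWithin, mem_nhdsWithin_of_mem_nhds (Iio_mem_nhds h)]
        with r hr hr'
      exact ⟨hr.1, hr'⟩
    rw [hyx t ht']
    refine ⟨(hx t ht').1, ((hx t ht').2.mono_of_mem_nhdsWithin hn).congr_of_eventuallyEq ?_
      (hyx t ht')⟩
    filter_upwards [hn] with r hr using hyx r hr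
  · have hst : s < t := hs2.trans_le (not_lt.1 h)
    have ht' : t ∈ Ico s b := ⟨hst.le, ht.2⟩
    have hn : Ico s b ∈ 𝓝[Ico t₁ b] t := by
      filter_upwards [self_mem_nhdsWithin, mem_nhdsWithin_of_mem_nhds (Ioi_mem_nhds hst)]
        with r hr hr'
      exact ⟨le_of_lt hr', hr.2⟩
    rw [hyz t hst.le]
    refine ⟨(hz t ht').1, ((hz t ht').2.mono_of_mem_nhdsWithin hn).congr_of_eventuallyEq ?_
      (hyz t hst.le)⟩
    filter_upwards [hn] with r hr using hyz r hr.1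

/-- under (H) with B > 0, a negative solution of (N) on [t₁,t₂) ⊆ [a,b),
where a,b are consecutive zeros of A with A > 0 on (a,b), extends to a negative
solution on [t₁,b). -/
theorem negative_solution_extends
    (T : ℝ) (hT : 0 < T) (A B C : ℝ → ℝ)
    (hA : ContDiff ℝ 1 A) (hB : ContDiff ℝ 1 B) (hC : ContDiff ℝ 1 C)
    (hAper : Function.Periodic A T) (hBper : Function.Periodic B T)
    (hCper : Function.Periodic C T)
    (hzero : ∃ t ∈ Icc (0 : ℝ) T, A t = 0)
    (hcond : (sInf ((fun t => |B t|) '' Icc (0 : ℝ) T)) ^ 2 >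
      -4 * sInf ((fun t => deriv A t) '' Icc (0 : ℝ) T) *
        (1 + T * sSup ((fun t => |C t|) '' Icc (0 : ℝ) T)))
    (hBpos : ∀ t : ℝ, 0 < B t)
    (a b : ℝ) (hab : a < b) (hAa : A a = 0) (hAb : A b = 0)
    (hApos : ∀ t ∈ Ioo a b, 0 < A t)
    (t₁ t₂ : ℝ) (hat₁ : a ≤ t₁) (ht₁t₂ : t₁ < t₂) (ht₂b : t₂ ≤ b)
    (x x' : ℝ → ℝ)
    (hsol : ∀ t ∈ Ico t₁ t₂, HasDerivWithinAt x (x' t) (Ico t₁ t₂) t ∧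
      x t * x' t = A t + B t * x t + C t * x t ^ 2)
    (hneg : ∀ t ∈ Ico t₁ t₂, x t < 0) :
    ∃ y y' : ℝ → ℝ,
      (∀ t ∈ Ico t₁ b, HasDerivWithinAt y (y' t) (Ico t₁ b) t ∧
        y t * y' t = A t + B t * y t + C t * y t ^ 2) ∧
      (∀ t ∈ Ico t₁ b, y t < 0) ∧
      (∀ t ∈ Ico t₁ t₂, y t = x t) := by
  -- The integrating factor `E = exp (∫ C)` is `exp ∘ G`.
  let G : ℝ → ℝ := fun t => ∫ u in (0 : ℝ)..t, C u
  have hG : ∀ t, HasDerivAt G (C t) t := fun t => hC.continuous.integral_hasStrictDerivAt 0 t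
    |>.hasDerivAt
  have hGc : Continuous G := continuous_iff_continuousAt.2 fun t => (hG t).continuousAt
  have hE : ∀ t, HasDerivAt (fun u => Real.exp (G u)) (Real.exp (G t) * C t) t :=
    fun t => (hG t).exp
  have hE' : ∀ t, HasDerivAt (fun u => Real.exp (-G u)) (Real.exp (-G t) * -C t) t :=
    fun t => (hG t).neg.exp
  have hEE : ∀ t, Real.exp (-G t) * Real.exp (G t) = 1 := fun t => by
    rw [← Real.exp_add, neg_add_cancel, Real.exp_zero]
  obtain ⟨z, hz, hzx⟩ := extend_reduced (P := fun t => A t * Real.exp (-G t) ^ 2)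
    (Q := fun t => B t * Real.exp (-G t)) (x := fun t => x t * Real.exp (-G t))
    (by have := hA.continuous; fun_prop) (by have := hB.continuous; fun_prop) ht₁t₂ ht₂b
    (fun t ht => mul_pos (hApos t ⟨hat₁.trans_lt ht.1, ht.2⟩) (by positivity)) (by
      intro t ht
      refine ⟨mul_neg_of_neg_of_pos (hneg t ht) (Real.exp_pos _), ?_⟩
      obtain ⟨hd, heq⟩ := hsol t ht
      have hx0 : x t ≠ 0 := (hneg t ht).ne
      have he0 : Real.exp (-G t) ≠ 0 := (Real.exp_pos _).ne'
      refine (hd.mul (hE' t).hasDerivWithinAt).congr_deriv ?_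
      have hx' : x' t = A t / x t + B t + C t * x t := by
        field_simp
        linear_combination heq
      rw [hx']
      generalize Real.exp (-G t) = e at he0 ⊢
      field_simp
      ring)
  refine ⟨fun t => z t * Real.exp (G t),
    fun t => (A t * Real.exp (-G t) ^ 2 / z t + B t * Real.exp (-G t)) * Real.exp (G t)
      + z t * (Real.exp (G t) * C t), fun t ht => ⟨?_, ?_⟩, fun t ht => ?_, fun t ht => ?_⟩
  · exact (hz t ht).2.mul (hE t).hasDerivWithinAt
  · have hz0 : z t ≠ 0 := (hz t ht).1.ne
    have hsimp : Real.exp (-G t) = 1 / Real.exp (G t) := by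
      rw [Real.exp_neg, one_div]
    have he0 : Real.exp (G t) ≠ 0 := (Real.exp_pos _).ne'
    simp only [hsimp]
    field_simp
  · exact mul_neg_of_neg_of_pos (hz t ht).1 (Real.exp_pos _)
  · simp only [hzx t ht, mul_assoc, hEE t, mul_one]
end

section
/- Assume (H) and that B(t) > 0 for all t. Let a < b be real numbers with A(a) = A(b) = 0 and A(t) > 0 for all t ∈ (a, b). Then there exists a C¹ solution x* of (N) on (a, b) such that x*(t) < 0 for all t ∈ (a, b), lim_{t→a⁺} x*(t) = 0, lim_{t→a⁺} x*′(t) = B(a)/2 − √(B(a)²/4 + A′(a)), lim_{t→b⁻} x*(t) = 0, and lim_{t→b⁻} x*′(t) = B(b)/2 − √(B(b)²/4 + A′(b)). -/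
open Set Filter Topology

/-!
Put `y = -x > 0`, so that the equation becomes `y' = A / y - B + C y`, and `u = y ^ 2`, so that
`u' = 2 (A - B √u + C u)`. This last field is continuous up to `u = 0`, and since `B ≥ 0` the
singular term `-B √u` is decreasing in `u`. Hence the problem with `u a = 0` can be solved through
the endpoint `a`: solutions of the fields with `√(u + ε)` in place of `√u` are uniformly Cauchy
as `ε → 0`, by Grönwall's inequality for the square of their difference
(`exists_sqrt_solution`).

The hypothesis on `A`, `B`, `C` and the bound `b - a ≤ T` give a slope `k` for which the line
`k (b - t)` is a strict upper barrier for `y` (`exists_slope`). Solving with `u` truncated to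
`[0, (k (b - t)) ^ 2]`, the barriers show that the truncation is never active, and that
`0 < y t ≤ k (b - t)` inside the interval; in particular `y` vanishes at both ends
(`exists_arc`).

For the derivative at the ends one studies `z = A / y`, for which `y' = z - B + C y` and
`y z' = A' + B z - z ^ 2 - C y z`. At an endpoint `e` the right side becomes the quadratic
`A' e + B e z - z ^ 2`, whose larger root is `Z = B e / 2 + √(B e ^ 2 / 4 + A' e)`; the claim is
`z → Z`. The sign of `z - q` is that of `A - q y`, and for `q > 0` the derivative of `A - q y` is
positive where `A - q y < 0` if the quadratic at `q` is positive, and symmetrically.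
At `a`, where `A - q y` starts from `0`, this gives `z ≥ q` for `0 < q < Z` and `z ≤ q` for
`q > Z` at once. At `b` the value `Z` is attracting: a bound `z ≥ q` or `z ≤ q` persists as soon as
it holds once, it must hold once because `y ≤ k (b - t)` makes `∫ 1 / y` diverge, and the smaller
root is excluded as a limit since it would force `y` to exceed `k (b - t)`.
-/

/-! ### Elementary inequalities -/

/-- Barrier principle: a function that starts nonnegative and is increasing wherever it is negative
stays nonnegative. No derivative is required at the endpoints. -/
lemma nonneg_of_deriv_pos_of_neg {h h' : ℝ → ℝ} {p q : ℝ}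
    (hc : ContinuousOn h (Icc p q)) (hp : 0 ≤ h p)
    (hd : ∀ r ∈ Ioo p q, HasDerivAt h (h' r) r)
    (hneg : ∀ r ∈ Ioo p q, h r < 0 → 0 < h' r) :
    ∀ r ∈ Icc p q, 0 ≤ h r := by
  intro t ht
  rcases ht.1.eq_or_lt with rfl | hpt
  · exact hp
  refine le_of_forall_pos_sub_le fun η hη => ?_
  have h1 : Tendsto h (𝓝[>] p) (𝓝 (h p)) :=
    (hc p ⟨le_rfl, ht.1.trans ht.2⟩).mono_of_mem_nhdsWithin
      (mem_of_superset (Ioo_mem_nhdsGT (hpt.trans_le ht.2)) Ioo_subset_Icc_self)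
  obtain ⟨p', hp', hp'1, hp'2⟩ :=
    ((h1.eventually (lt_mem_nhds (show -η < h p by linarith))).and
      (Ioo_mem_nhdsGT hpt)).exists
  have := image_le_of_deriv_right_lt_deriv_boundary' (f := fun _ => -η) (f' := fun _ => 0)
    (B := h) (B' := h') (a := p') (b := t) continuousOn_const
    (fun x _ => hasDerivWithinAt_const _ _ _) hp'.le
    (hc.mono (Icc_subset_Icc hp'1.le ht.2))
    (fun x hx => (hd x ⟨hp'1.trans_le hx.1, hx.2.trans_le ht.2⟩).hasDerivWithinAt)
    (fun x hx hxe => hneg x ⟨hp'1.trans_le hx.1, hx.2.trans_le ht.2⟩ (by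
      have : -η = h x := hxe
      linarith))
    (right_mem_Icc.2 hp'2.le)
  have : -η ≤ h t := this
  linarith

lemma abs_sqrt_add_sub_le {p q ε : ℝ} (hp : 0 ≤ p) (hq : 0 ≤ q) (hε : 0 < ε) :
    |√(p + ε) - √(q + ε)| ≤ |p - q| / √ε := by
  have h0 : 0 < √ε := Real.sqrt_pos.2 hε
  have h1 : √ε ≤ √(p + ε) := Real.sqrt_le_sqrt (by linarith)
  have h2 : √ε ≤ √(q + ε) := Real.sqrt_le_sqrt (by linarith)
  have h3 : (√(p + ε) - √(q + ε)) * (√(p + ε) + √(q + ε)) = p - q := by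
    nlinarith [Real.sq_sqrt (show 0 ≤ p + ε by linarith), Real.sq_sqrt (show 0 ≤ q + ε by linarith)]
  rw [le_div_iff₀ h0, ← h3, abs_mul]
  gcongr
  rw [abs_of_pos (by linarith)]
  linarith

lemma abs_sqrt_sub_le_sqrt {p q : ℝ} (hp : 0 ≤ p) (hq : 0 ≤ q) :
    |√p - √q| ≤ √|p - q| := by
  apply Real.le_sqrt_of_sq_le
  have h3 : (√p - √q) * (√p + √q) = p - q := by
    nlinarith [Real.sq_sqrt hp, Real.sq_sqrt hq]
  have hp' := Real.sqrt_nonneg p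
  have hq' := Real.sqrt_nonneg q
  rw [← h3, abs_mul, sq, abs_of_nonneg (add_nonneg hp' hq')]
  refine mul_le_mul_of_nonneg_left ?_ (abs_nonneg (√p - √q))
  exact abs_sub_le_iff.2 ⟨by linarith, by linarith⟩

/-! ### The equation for the square of the solution -/

/-- The right-hand side of `u' = 2 (A - B √u + C u)`, with `u` truncated by `φ t` and the square
root regularised by `ε`; it is Lipschitz in `v` when `ε > 0`. -/
noncomputable def absField (A B C : ℝ → ℝ) (φ : ℝ → ℝ → ℝ) (ε t v : ℝ) : ℝ :=
  2 * (A t - B t * √(φ t v + ε) + C t * φ t v)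

section
variable {A B C : ℝ → ℝ} {φ : ℝ → ℝ → ℝ} {a b R N : ℝ}

/-- Picard–Lindelöf for the regularised field: it is globally bounded, so solutions exist on the whole
of `[a, b]`. -/
lemma exists_absField_solution
    (hA : Continuous A) (hB : Continuous B) (hC : Continuous C)
    (hφc : ∀ v, Continuous fun t => φ t v)
    (hφl : ∀ t v w, |φ t v - φ t w| ≤ |v - w|)
    (hφ0 : ∀ t v, 0 ≤ φ t v) (hφR : ∀ t ∈ Icc a b, ∀ v, φ t v ≤ R)
    (hab : a < b) (hN : 0 < N)
    (hAN : ∀ t ∈ Icc a b, |A t| ≤ N) (hBN : ∀ t ∈ Icc a b, |B t| ≤ N)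
    (hCN : ∀ t ∈ Icc a b, |C t| ≤ N) {ε : ℝ} (hε : 0 < ε) :
    ∃ u : ℝ → ℝ, u a = 0 ∧ ∀ t ∈ Icc a b,
      HasDerivWithinAt u (absField A B C φ ε t (u t)) (Icc a b) t := by
  have hR : 0 ≤ R := (hφ0 a 0).trans (hφR a ⟨le_rfl, hab.le⟩ 0)
  obtain ⟨L, hL⟩ : ∃ L : NNReal, (L : ℝ) = 2 * (N + N * √(R + ε) + N * R) :=
    ⟨⟨_, by positivity⟩, rfl⟩
  obtain ⟨K, hK⟩ : ∃ K : NNReal, (K : ℝ) = 2 * (N / √ε + N) :=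
    ⟨⟨_, by positivity⟩, rfl⟩
  obtain ⟨ρ, hρ⟩ : ∃ ρ : NNReal, (ρ : ℝ) = L * (b - a) :=
    ⟨⟨_, mul_nonneg L.2 (sub_nonneg.2 hab.le)⟩, rfl⟩
  have hPL : IsPicardLindelof (absField A B C φ ε) (⟨a, ⟨le_rfl, hab.le⟩⟩ : Icc a b) 0
      ρ 0 L K := by
    refine ⟨fun t ht => ?_, fun v _ => ?_, fun t ht v _ => ?_, ?_⟩
    · refine LipschitzOnWith.of_dist_le_mul fun v _ w _ => ?_
      simp only [Real.dist_eq, absField]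
      have e : 2 * (A t - B t * √(φ t v + ε) + C t * φ t v) -
          2 * (A t - B t * √(φ t w + ε) + C t * φ t w) =
          2 * (-B t * (√(φ t v + ε) - √(φ t w + ε)) + C t * (φ t v - φ t w)) := by ring
      rw [e, abs_mul, abs_two, hK, mul_assoc]
      gcongr
      refine (abs_add_le _ _).trans ?_
      rw [abs_mul, abs_mul, abs_neg, add_mul]
      refine add_le_add ?_ (mul_le_mul (hCN t ht) (hφl t v w) (abs_nonneg _) hN.le)
      calc |B t| * |√(φ t v + ε) - √(φ t w + ε)| ≤ N * (|v - w| / √ε) := by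
            refine mul_le_mul (hBN t ht) ?_ (abs_nonneg _) hN.le
            refine (abs_sqrt_add_sub_le (hφ0 t v) (hφ0 t w) hε).trans ?_
            exact div_le_div_of_nonneg_right (hφl t v w) (Real.sqrt_nonneg _)
        _ = _ := by ring
    · have := hφc v
      unfold absField
      fun_prop
    · simp only [absField, Real.norm_eq_abs]
      rw [abs_mul, abs_two, hL]
      gcongr
      refine (abs_add_le _ _).trans ?_
      gcongr
      · refine (abs_sub _ _).trans ?_
        rw [abs_mul, abs_of_nonneg (Real.sqrt_nonneg _)]
        gcongr
        · exact hAN t ht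
        · exact hBN t ht
        · exact hφR t ht v
      · rw [abs_mul, abs_of_nonneg (hφ0 t v)]
        exact mul_le_mul (hCN t ht) (hφR t ht v) (hφ0 t v) hN.le
    · simp [hab.le, hρ]
  obtain ⟨u, hu0, hu⟩ := hPL.exists_eq_forall_mem_Icc_hasDerivWithinAt₀
  exact ⟨u, hu0, hu⟩

/-- Stability in the regularisation parameter. The bound does not involve the Lipschitz constant of
`√(· + ε)`, which blows up as `ε → 0`: monotonicity of the square root and `B ≥ 0` give the
singular term a favourable sign. -/
lemma abs_sub_le_of_absField
    (hφm : ∀ t, Monotone (φ t))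
    (hφl : ∀ t v w, |φ t v - φ t w| ≤ |v - w|)
    (hφ0 : ∀ t v, 0 ≤ φ t v) (hB0 : ∀ t ∈ Icc a b, 0 ≤ B t) (hN : 0 < N)
    (hBN : ∀ t ∈ Icc a b, |B t| ≤ N)
    (hCN : ∀ t ∈ Icc a b, |C t| ≤ N) {ε δ : ℝ} (hε : 0 ≤ ε) (hδ : 0 ≤ δ) {u v : ℝ → ℝ}
    (hu0 : u a = 0) (hu : ∀ t ∈ Icc a b,
      HasDerivWithinAt u (absField A B C φ ε t (u t)) (Icc a b) t)
    (hv0 : v a = 0) (hv : ∀ t ∈ Icc a b,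
      HasDerivWithinAt v (absField A B C φ δ t (v t)) (Icc a b) t) :
    ∀ t ∈ Icc a b, |u t - v t| ≤ Real.exp (3 * N * (b - a)) * (√ε + √δ) := by
  set s := √ε + √δ with hs
  have hs0 : 0 ≤ s := by positivity
  set w : ℝ → ℝ := fun t => (u t - v t) ^ 2 with hw
  have hwd : ∀ t ∈ Icc a b, HasDerivWithinAt w
      (2 * (u t - v t) * (absField A B C φ ε t (u t) - absField A B C φ δ t (v t)))
      (Icc a b) t := by
    intro t ht
    have := ((hu t ht).sub (hv t ht)).pow 2
    refine (this.congr_deriv ?_).congr (fun _ _ => rfl) rfl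
    simp
  have hbd : ∀ t ∈ Ico a b,
      2 * (u t - v t) * (absField A B C φ ε t (u t) - absField A B C φ δ t (v t)) ≤
        6 * N * w t + 2 * N * s ^ 2 := by
    intro t ht'
    have ht := Ico_subset_Icc_self ht'
    set D := u t - v t with hD
    set p := φ t (u t)
    set q := φ t (v t)
    have hp : 0 ≤ p := hφ0 _ _
    have hq : 0 ≤ q := hφ0 _ _
    have h1 : 0 ≤ D * (√p - √q) := by
      rcases le_total (v t) (u t) with h | h
      · exact mul_nonneg (by linarith) (sub_nonneg.2 (Real.sqrt_le_sqrt (hφm t h)))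
      · exact mul_nonneg_of_nonpos_of_nonpos (by linarith)
          (sub_nonpos.2 (Real.sqrt_le_sqrt (hφm t h)))
    have e1 : |√(p + ε) - √p| ≤ √ε := by
      simpa [abs_of_nonneg hε] using abs_sqrt_sub_le_sqrt (add_nonneg hp hε) hp
    have e2 : |√(q + δ) - √q| ≤ √δ := by
      simpa [abs_of_nonneg hδ] using abs_sqrt_sub_le_sqrt (add_nonneg hq hδ) hq
    have e3 : |(√(p + ε) - √p) - (√(q + δ) - √q)| ≤ s := (abs_sub _ _).trans (by linarith)
    have hBt := hB0 t ht
    have hB' := (abs_le.1 (hBN t ht)).2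
    have e4 : -(|D| * s) ≤ D * ((√(p + ε) - √p) - (√(q + δ) - √q)) := by
      have : |D * ((√(p + ε) - √p) - (√(q + δ) - √q))| ≤ |D| * s := by
        rw [abs_mul]; gcongr
      exact (abs_le.1 this).1
    have e5 : D * (C t * (p - q)) ≤ N * D ^ 2 := by
      calc D * (C t * (p - q)) ≤ |D * (C t * (p - q))| := le_abs_self _
        _ = |D| * (|C t| * |p - q|) := by rw [abs_mul, abs_mul]
        _ ≤ |D| * (N * |D|) :=
          mul_le_mul_of_nonneg_left
            (mul_le_mul (hCN t ht) (hφl _ _ _) (abs_nonneg _) hN.le) (abs_nonneg _)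
        _ = N * |D| ^ 2 := by ring
        _ = _ := by rw [sq_abs]
    have e6 : B t * (|D| * s) ≤ N * ((D ^ 2 + s ^ 2) / 2) := by
      have : |D| * s ≤ (D ^ 2 + s ^ 2) / 2 := by
        nlinarith [sq_nonneg (|D| - s), sq_abs D]
      gcongr
    have e7 : -(N * ((D ^ 2 + s ^ 2) / 2)) ≤ B t * (D * (√(p + ε) - √(q + δ))) := by
      have : D * (√(p + ε) - √(q + δ)) = D * (√p - √q) +
        D * ((√(p + ε) - √p) - (√(q + δ) - √q)) := by ring
      rw [this]
      have := mul_le_mul_of_nonneg_left (add_le_add h1 e4) hBt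
      linarith
    have e8 : 2 * D * (absField A B C φ ε t (u t) - absField A B C φ δ t (v t)) =
        4 * (D * (C t * (p - q))) - 4 * (B t * (D * (√(p + ε) - √(q + δ)))) := by
      simp only [absField, p, q]; ring
    rw [e8]
    simp only [hw, ← hD]
    linarith
  have hG := le_gronwallBound_of_liminf_deriv_right_le (f := w) (a := a) (b := b) (δ := 0)
    (K := 6 * N) (ε := 2 * N * s ^ 2)
    (fun t ht => (hwd t ht).continuousWithinAt)
    (fun t ht r hr => ((hwd t (Ico_subset_Icc_self ht)).mono_of_mem_nhdsWithin
      (Icc_mem_nhdsGE_of_mem ht)).liminf_right_slope_le hr) (by simp [hw, hu0, hv0]) hbd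
  intro t ht
  have h1 := hG t ht
  rw [gronwallBound_of_K_ne_0 (by positivity)] at h1
  have h2 : w t ≤ (Real.exp (3 * N * (b - a)) * s) ^ 2 := by
    refine h1.trans ?_
    have e1 : Real.exp (3 * N * (b - a)) ^ 2 = Real.exp (6 * N * (b - a)) := by
      rw [← Real.exp_nat_mul]; congr 1; push_cast; ring
    have e2 : 2 * N * s ^ 2 / (6 * N) = s ^ 2 / 3 := by field_simp; ring
    have e3 : Real.exp (6 * N * (t - a)) ≤ Real.exp (6 * N * (b - a)) := by
      gcongr; exact ht.2
    rw [mul_pow, e1, e2]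
    nlinarith [sq_nonneg s, Real.exp_pos (6 * N * (t - a)),
      mul_le_mul_of_nonneg_left e3 (sq_nonneg s), mul_nonneg (sq_nonneg s) (Real.exp_pos (6 * N * (t - a))).le]
  exact abs_le_of_sq_le_sq h2 (by positivity)
end

/-- The unregularised problem `u' = 2 (A - B √u + C u)`, `u a = 0` (with `u` truncated by `φ`) is
solvable on `[a, b]`. -/
lemma exists_sqrt_solution {A B C : ℝ → ℝ} {φ : ℝ → ℝ → ℝ} {a b R : ℝ}
    (hA : Continuous A) (hB : Continuous B) (hC : Continuous C)
    (hφc : ∀ v, Continuous fun t => φ t v)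
    (hφm : ∀ t, Monotone (φ t))
    (hφl : ∀ t v w, |φ t v - φ t w| ≤ |v - w|)
    (hφ0 : ∀ t v, 0 ≤ φ t v) (hφR : ∀ t ∈ Icc a b, ∀ v, φ t v ≤ R)
    (hB0 : ∀ t, 0 ≤ B t) (hab : a < b) :
    ∃ u : ℝ → ℝ, ContinuousOn u (Icc a b) ∧ u a = 0 ∧ ∀ t ∈ Ioo a b,
      HasDerivAt u (2 * (A t - B t * √(φ t (u t)) + C t * φ t (u t))) t := by
  obtain ⟨N, hN, hAN, hBN, hCN⟩ : ∃ N : ℝ, 0 < N ∧ (∀ t ∈ Icc a b, |A t| ≤ N) ∧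
      (∀ t ∈ Icc a b, |B t| ≤ N) ∧ (∀ t ∈ Icc a b, |C t| ≤ N) := by
    obtain ⟨n1, h1⟩ := isCompact_Icc.exists_bound_of_continuousOn (s := Icc a b) hA.continuousOn
    obtain ⟨n2, h2⟩ := isCompact_Icc.exists_bound_of_continuousOn (s := Icc a b) hB.continuousOn
    obtain ⟨n3, h3⟩ := isCompact_Icc.exists_bound_of_continuousOn (s := Icc a b) hC.continuousOn
    simp only [Real.norm_eq_abs] at h1 h2 h3
    refine ⟨max 1 (max n1 (max n2 n3)), by positivity, fun t ht => (h1 t ht).trans (by simp),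
      fun t ht => (h2 t ht).trans (by simp), fun t ht => (h3 t ht).trans (by simp)⟩
  set ε : ℕ → ℝ := fun n => 1 / ((n : ℝ) + 1) with hε
  have hεpos : ∀ n, 0 < ε n := fun n => by positivity
  have hεlim : Tendsto (fun n => √(ε n)) atTop (𝓝 0) := by
    have := (tendsto_one_div_add_atTop_nhds_zero_nat (𝕜 := ℝ)).sqrt
    rwa [Real.sqrt_zero] at this
  have hεanti : ∀ n m, n ≤ m → √(ε m) ≤ √(ε n) := fun n m h =>
    Real.sqrt_le_sqrt (one_div_le_one_div_of_le (by positivity) (by gcongr))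
  choose u hu0 hu using fun n => exists_absField_solution hA hB hC hφc hφl hφ0 hφR hab hN
    hAN hBN hCN (hεpos n)
  set E := Real.exp (3 * N * (b - a))
  have hdiff : ∀ n m, ∀ t ∈ Icc a b, |u n t - u m t| ≤ E * (√(ε n) + √(ε m)) := fun n m =>
    abs_sub_le_of_absField hφm hφl hφ0 (fun t _ => hB0 t) hN hBN hCN (hεpos n).le (hεpos m).le
      (hu0 n) (hu n) (hu0 m) (hu m)
  have hlim : ∀ t ∈ Icc a b, ∃ l, Tendsto (fun n => u n t) atTop (𝓝 l) := by
    intro t ht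
    refine cauchySeq_tendsto_of_complete (cauchySeq_of_le_tendsto_0'
      (fun n => E * (√(ε n) + √(ε n))) (fun n m hnm => ?_) ?_)
    · rw [Real.dist_eq]
      refine (hdiff n m t ht).trans ?_
      have := hεanti n m hnm
      exact mul_le_mul_of_nonneg_left (by linarith) (Real.exp_pos _).le
    · simpa using (hεlim.add hεlim).const_mul E
  choose! U hU using hlim
  have hUd : ∀ n, ∀ t ∈ Icc a b, |u n t - U t| ≤ E * √(ε n) := by
    intro n t ht
    have h1 : Tendsto (fun m => |u n t - u m t|) atTop (𝓝 |u n t - U t|) :=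
      ((hU t ht).const_sub _).abs
    have h2 : Tendsto (fun m => E * (√(ε n) + √(ε m))) atTop (𝓝 (E * (√(ε n) + 0))) :=
      (hεlim.const_add _).const_mul E
    rw [add_zero] at h2
    exact le_of_tendsto_of_tendsto' h1 h2 fun m => hdiff n m t ht
  have hE : Tendsto (fun n => E * √(ε n)) atTop (𝓝 0) := by simpa using hεlim.const_mul E
  refine ⟨U, ?_, ?_, ?_⟩
  · have : TendstoUniformlyOn u U atTop (Icc a b) := by
      rw [Metric.tendstoUniformlyOn_iff]
      intro η hη
      filter_upwards [hE.eventually (gt_mem_nhds hη)] with n hn t ht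
      rw [dist_comm, Real.dist_eq]
      exact (hUd n t ht).trans_lt hn
    exact this.continuousOn (Frequently.of_forall fun n t ht => (hu n t ht).continuousWithinAt)
  · have := hU a ⟨le_rfl, hab.le⟩
    simp only [hu0] at this
    exact tendsto_nhds_unique this tendsto_const_nhds
  · intro t ht
    refine hasDerivAt_of_tendstoUniformlyOn (l := atTop) (s := Ioo a b) (f := u)
      (f' := fun n t => absField A B C φ (ε n) t (u n t))
      (g' := fun t => 2 * (A t - B t * √(φ t (U t)) + C t * φ t (U t))) isOpen_Ioo ?_
      (Eventually.of_forall fun n s hs => (hu n s (Ioo_subset_Icc_self hs)).hasDerivAt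
        (Icc_mem_nhds hs.1 hs.2)) (fun s hs => hU s (Ioo_subset_Icc_self hs)) ht
    rw [Metric.tendstoUniformlyOn_iff]
    intro η hη
    have hT : Tendsto (fun n => 2 * (N * (√(ε n) + √(E * √(ε n))) + N * (E * √(ε n)))) atTop
        (𝓝 0) := by
      simpa using (((hεlim.add hE.sqrt).const_mul N).add (hE.const_mul N)).const_mul 2
    filter_upwards [hT.eventually (gt_mem_nhds hη)] with n hn s hs'
    have hs := Ioo_subset_Icc_self hs'
    refine lt_of_le_of_lt ?_ hn
    rw [dist_comm, Real.dist_eq]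
    set p := φ s (u n s)
    set q := φ s (U s)
    have hp : 0 ≤ p := hφ0 _ _
    have hq : 0 ≤ q := hφ0 _ _
    have hpq : |p - q| ≤ E * √(ε n) := (hφl _ _ _).trans (hUd n s hs)
    have e : absField A B C φ (ε n) s (u n s) - 2 * (A s - B s * √q + C s * q) =
        2 * (-B s * ((√(p + ε n) - √p) + (√p - √q)) + C s * (p - q)) := by
      simp only [absField, p]; ring
    rw [e, abs_mul, abs_two]
    gcongr
    refine (abs_add_le _ _).trans ?_
    rw [abs_mul, abs_mul, abs_neg]
    gcongr
    · exact hBN s hs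
    · refine (abs_add_le _ _).trans ?_
      gcongr
      · simpa [abs_of_nonneg (hεpos n).le] using
          abs_sqrt_sub_le_sqrt (add_nonneg hp (hεpos n).le) hp
      · exact (abs_sqrt_sub_le_sqrt hp hq).trans (Real.sqrt_le_sqrt hpq)
    · exact hCN s hs

/-! ### Behaviour of `A / y` at the endpoints -/

/-- A function whose derivative dominates `c / (b - t)` grows like `-c log (b - t)` at `b`. -/
lemma not_bddAbove_of_div_le_deriv {g g' : ℝ → ℝ} {d b c K : ℝ} (hdb : d < b) (hc : 0 < c)
    (hg : ∀ t ∈ Ioo d b, HasDerivAt g (g' t) t)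
    (hg' : ∀ t ∈ Ioo d b, c / (b - t) ≤ g' t) (hK : ∀ t ∈ Ioo d b, g t ≤ K) : False := by
  set G : ℝ → ℝ := fun t => g t + c * Real.log (b - t) with hG
  have hGd : ∀ t ∈ Ioo d b, HasDerivAt G (g' t + c * (-1 / (b - t))) t := fun t ht =>
    (hg t ht).add ((((hasDerivAt_id t).const_sub b).log (sub_pos.2 ht.2).ne').const_mul c)
  have hmono : MonotoneOn G (Ioo d b) := by
    refine monotoneOn_of_deriv_nonneg (convex_Ioo d b)
      (fun t ht => (hGd t ht).continuousAt.continuousWithinAt)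
      (fun t ht => ?_) (fun t ht => ?_)
    · rw [interior_Ioo] at ht
      exact (hGd t ht).differentiableAt.differentiableWithinAt
    · rw [interior_Ioo] at ht
      rw [(hGd t ht).deriv]
      have := hg' t ht
      have e : c * (-1 / (b - t)) = -(c / (b - t)) := by ring
      linarith
  set t₀ := (d + b) / 2 with ht₀
  have h0 : t₀ ∈ Ioo d b := ⟨by linarith, by linarith⟩
  set E := Real.exp ((G t₀ - K - 1) / c) with hE
  set e := min E (b - t₀) with he
  have he0 : 0 < e := lt_min (Real.exp_pos _) (by linarith [h0.2])
  have he1 : e ≤ b - t₀ := min_le_right _ _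
  have ht : b - e ∈ Ioo d b := ⟨by linarith [h0.1], by linarith⟩
  have h1 := hmono h0 ht (by linarith)
  have h2 : Real.log e ≤ (G t₀ - K - 1) / c := by
    rw [← Real.log_exp ((G t₀ - K - 1) / c)]
    exact Real.log_le_log he0 (min_le_left _ _)
  have h3 := hK _ ht
  have h4 : c * Real.log e ≤ G t₀ - K - 1 := by
    rw [le_div_iff₀ hc] at h2; linarith
  have h5 : G (b - e) = g (b - e) + c * Real.log e := by simp [hG]
  linarith

section
variable {A B C y : ℝ → ℝ} {a b : ℝ}

/-- `y` is a positive solution of `y' = A / y - B + C y` on `(a, b)`, continuous on `[a, b]` and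
vanishing at both ends, where `A > 0` on `(a, b)` vanishes at both ends too; the regularity of the
coefficients is bundled in. -/
structure IsArc (A B C : ℝ → ℝ) (a b : ℝ) (y : ℝ → ℝ) : Prop where
  lt : a < b
  diffA : Differentiable ℝ A
  contA' : Continuous (deriv A)
  contB : Continuous B
  contC : Continuous C
  A_left : A a = 0
  A_right : A b = 0
  A_pos : ∀ t ∈ Ioo a b, 0 < A t
  cont : ContinuousOn y (Icc a b)
  left : y a = 0
  right : y b = 0
  pos : ∀ t ∈ Ioo a b, 0 < y t
  hasDeriv : ∀ t ∈ Ioo a b, HasDerivAt y (A t / y t - B t + C t * y t) t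

/-- The quadratic in `q` with `y z' = arcPoly A B C y z t` for `z = A / y`. -/
noncomputable def arcPoly (A B C y : ℝ → ℝ) (q t : ℝ) : ℝ :=
  deriv A t + B t * q - q ^ 2 - C t * y t * q

namespace IsArc

lemma hasDeriv_sub (h : IsArc A B C a b y) (q : ℝ) {t : ℝ} (ht : t ∈ Ioo a b) :
    HasDerivAt (fun t => A t - q * y t)
      (deriv A t - q * (A t / y t - B t + C t * y t)) t :=
  (h.diffA t).hasDerivAt.sub ((h.hasDeriv t ht).const_mul q)

lemma cont_sub (h : IsArc A B C a b y) (q : ℝ) :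
    ContinuousOn (fun t => A t - q * y t) (Icc a b) :=
  h.diffA.continuous.continuousOn.sub (h.cont.const_smul q)

lemma hasDeriv_div (h : IsArc A B C a b y) {t : ℝ} (ht : t ∈ Ioo a b) :
    HasDerivAt (fun t => A t / y t) (arcPoly A B C y (A t / y t) t / y t) t := by
  have hy := (h.pos t ht).ne'
  refine ((h.diffA t).hasDerivAt.div (h.hasDeriv t ht) hy).congr_deriv ?_
  simp only [arcPoly]
  field_simp
  ring

/-- The bound `q ≤ A / y` persists forward in time while `arcPoly` is positive at `q`. It is written
as `q * y ≤ A` so that it also makes sense, and holds, at the endpoint `a`. -/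
lemma mul_le_of_arcPoly_pos (h : IsArc A B C a b y) {q s r : ℝ} (hq : 0 < q)
    (has : a ≤ s) (hrb : r ≤ b) (hs : q * y s ≤ A s)
    (hP : ∀ t ∈ Ioo s r, 0 < arcPoly A B C y q t) :
    ∀ t ∈ Icc s r, q * y t ≤ A t := by
  intro t ht
  have hsub : ∀ t ∈ Ioo s r, t ∈ Ioo a b := fun t ht =>
    ⟨has.trans_lt ht.1, ht.2.trans_le hrb⟩
  have := nonneg_of_deriv_pos_of_neg ((h.cont_sub q).mono (Icc_subset_Icc has hrb))
    (sub_nonneg.2 hs) (fun t ht => h.hasDeriv_sub q (hsub t ht)) (fun t ht hneg => ?_) t ht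
  · exact sub_nonneg.1 this
  · have h1 : A t / y t < q := by
      rw [div_lt_iff₀ (h.pos t (hsub t ht))]; linarith
    have h2 := hP t ht
    simp only [arcPoly] at h2
    nlinarith [mul_lt_mul_of_pos_left h1 hq]

/-- The bound `A / y ≤ q` persists forward in time while `arcPoly` is negative at `q`. -/
lemma le_mul_of_arcPoly_neg (h : IsArc A B C a b y) {q s r : ℝ} (hq : 0 < q)
    (has : a ≤ s) (hrb : r ≤ b) (hs : A s ≤ q * y s)
    (hP : ∀ t ∈ Ioo s r, arcPoly A B C y q t < 0) :
    ∀ t ∈ Icc s r, A t ≤ q * y t := by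
  intro t ht
  have hsub : ∀ t ∈ Ioo s r, t ∈ Ioo a b := fun t ht =>
    ⟨has.trans_lt ht.1, ht.2.trans_le hrb⟩
  have := nonneg_of_deriv_pos_of_neg (((h.cont_sub q).mono (Icc_subset_Icc has hrb)).neg)
    (by simpa using hs) (fun t ht => (h.hasDeriv_sub q (hsub t ht)).neg)
    (fun t ht hneg => ?_) t ht
  · simpa using this
  · have h0 : q * y t < A t := by simpa using hneg
    have h1 : q < A t / y t := by
      rw [lt_div_iff₀ (h.pos t (hsub t ht))]; linarith
    have h2 := hP t ht
    simp only [arcPoly] at h2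
    nlinarith [mul_lt_mul_of_pos_left h1 hq]

lemma tendsto_left (h : IsArc A B C a b y) : Tendsto y (𝓝[>] a) (𝓝 0) := by
  rw [← h.left]
  exact (h.cont a ⟨le_rfl, h.lt.le⟩).mono_of_mem_nhdsWithin
    (mem_of_superset (Ioo_mem_nhdsGT h.lt) Ioo_subset_Icc_self)

lemma tendsto_right (h : IsArc A B C a b y) : Tendsto y (𝓝[<] b) (𝓝 0) := by
  rw [← h.right]
  exact (h.cont b ⟨h.lt.le, le_rfl⟩).mono_of_mem_nhdsWithin
    (mem_of_superset (Ioo_mem_nhdsLT h.lt) Ioo_subset_Icc_self)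

lemma tendsto_arcPoly (h : IsArc A B C a b y) (q : ℝ) {e : ℝ} {l : Filter ℝ} (hl : l ≤ 𝓝 e)
    (hy : Tendsto y l (𝓝 0)) :
    Tendsto (arcPoly A B C y q) l (𝓝 (deriv A e + B e * q - q ^ 2)) := by
  have h1 := (h.contA'.tendsto e).mono_left hl
  have h2 := (h.contB.tendsto e).mono_left hl
  have h3 := (h.contC.tendsto e).mono_left hl
  have := ((h1.add (h2.mul_const q)).sub_const (q ^ 2)).sub ((h3.mul hy).mul_const q)
  rw [mul_zero, zero_mul, sub_zero] at this
  exact this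

lemma left_lower (h : IsArc A B C a b y) {q : ℝ} (hq : 0 < q)
    (hP : 0 < deriv A a + B a * q - q ^ 2) : ∀ᶠ t in 𝓝[>] a, q ≤ A t / y t := by
  have h1 := (h.tendsto_arcPoly q nhdsWithin_le_nhds h.tendsto_left).eventually (lt_mem_nhds hP)
  obtain ⟨d, hd, hd'⟩ := mem_nhdsGT_iff_exists_Ioo_subset.1 (h1.and (Ioo_mem_nhdsGT h.lt))
  filter_upwards [Ioo_mem_nhdsGT hd] with t ht
  have htb := (hd' ht).2
  rw [le_div_iff₀ (h.pos t htb)]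
  exact h.mul_le_of_arcPoly_pos hq le_rfl htb.2.le (by simp [h.left, h.A_left])
    (fun s hs => (hd' ⟨hs.1, hs.2.trans ht.2⟩).1) t ⟨htb.1.le, le_rfl⟩

lemma left_upper (h : IsArc A B C a b y) {q : ℝ} (hq : 0 < q)
    (hP : deriv A a + B a * q - q ^ 2 < 0) : ∀ᶠ t in 𝓝[>] a, A t / y t ≤ q := by
  have h1 := (h.tendsto_arcPoly q nhdsWithin_le_nhds h.tendsto_left).eventually (gt_mem_nhds hP)
  obtain ⟨d, hd, hd'⟩ := mem_nhdsGT_iff_exists_Ioo_subset.1 (h1.and (Ioo_mem_nhdsGT h.lt))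
  filter_upwards [Ioo_mem_nhdsGT hd] with t ht
  have htb := (hd' ht).2
  rw [div_le_iff₀ (h.pos t htb)]
  exact h.le_mul_of_arcPoly_neg hq le_rfl htb.2.le (by simp [h.left, h.A_left])
    (fun s hs => (hd' ⟨hs.1, hs.2.trans ht.2⟩).1) t ⟨htb.1.le, le_rfl⟩

lemma right_lower_of_exists (h : IsArc A B C a b y) {q d : ℝ} (hq : 0 < q)
    (had : a ≤ d) (hd' : ∀ t ∈ Ioo d b, 0 < arcPoly A B C y q t)
    (hex : ∃ t ∈ Ioo d b, q ≤ A t / y t) : ∀ᶠ t in 𝓝[<] b, q ≤ A t / y t := by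
  obtain ⟨s, hs, hsq⟩ := hex
  have hsab : s ∈ Ioo a b := ⟨had.trans_lt hs.1, hs.2⟩
  rw [le_div_iff₀ (h.pos s hsab)] at hsq
  filter_upwards [Ioo_mem_nhdsLT hs.2] with t ht
  rw [le_div_iff₀ (h.pos t ⟨hsab.1.trans ht.1, ht.2⟩)]
  exact h.mul_le_of_arcPoly_pos hq hsab.1.le le_rfl hsq
    (fun r hr => hd' r ⟨hs.1.trans hr.1, hr.2⟩) t ⟨ht.1.le, ht.2.le⟩

/-- The barrier `y ≤ k (b - t)` keeps `A / y` away from the smaller root at `b`: if `A / y < q` up to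
`b` then `y' < -k` near `b`, so `y` would exceed `k (b - t)`. -/
lemma right_lower_slow (h : IsArc A B C a b y) {q k : ℝ} (hq : 0 < q)
    (hk : ∀ t ∈ Icc a b, y t ≤ k * (b - t)) (hqk : q < B b - k)
    (hP : 0 < deriv A b + B b * q - q ^ 2) : ∀ᶠ t in 𝓝[<] b, q ≤ A t / y t := by
  have h1 := (h.tendsto_arcPoly q nhdsWithin_le_nhds h.tendsto_right).eventually (lt_mem_nhds hP)
  have h2 : Tendsto (fun t => q - B t + C t * y t) (𝓝[<] b) (𝓝 (q - B b + C b * 0)) :=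
    (((h.contB.tendsto b).mono_left nhdsWithin_le_nhds).const_sub q).add
      (((h.contC.tendsto b).mono_left nhdsWithin_le_nhds).mul h.tendsto_right)
  have h3 := h2.eventually (gt_mem_nhds (show q - B b + C b * 0 < -k by linarith))
  obtain ⟨d, hd, hd'⟩ := mem_nhdsLT_iff_exists_Ioo_subset.1
    ((h1.and h3).and (Ioo_mem_nhdsLT h.lt))
  have hdb : d < b := hd
  have hmem : ∀ t ∈ Ioo (max a d) b, t ∈ Ioo d b := fun t ht =>
    ⟨(le_max_right _ _).trans_lt ht.1, ht.2⟩
  refine h.right_lower_of_exists hq (le_max_left a d)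
    (fun t ht => (hd' (hmem t ht)).1.1) ?_
  by_contra! hno
  have hm : max a d < b := max_lt h.lt hdb
  set s := (max a d + b) / 2 with hs
  have hs1 : max a d < s := by linarith
  have hs2 : s < b := by linarith
  have has : a ≤ s := (le_max_left a d).trans hs1.le
  have hsub : ∀ t ∈ Ioo s b, t ∈ Ioo (max a d) b := fun t ht => ⟨hs1.trans ht.1, ht.2⟩
  have hanti : StrictAntiOn (fun t => y t + k * t) (Icc s b) := by
    have hder : ∀ t ∈ Ioo s b,
        HasDerivAt (fun t => y t + k * t) (A t / y t - B t + C t * y t + k * 1) t := fun t ht =>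
      (h.hasDeriv t ⟨has.trans_lt ht.1, ht.2⟩).add ((hasDerivAt_id t).const_mul k)
    refine strictAntiOn_of_deriv_neg (convex_Icc s b) ?_ (fun t ht => ?_)
    · exact (h.cont.mono (Icc_subset_Icc has le_rfl)).add (by fun_prop)
    · rw [interior_Icc] at ht
      rw [(hder t ht).deriv]
      have e1 := hno t (hsub t ht)
      have e2 : q - B t + C t * y t < -k := (hd' (hmem t (hsub t ht))).1.2
      linarith
  have h4 := hanti ⟨le_rfl, hs2.le⟩ ⟨hs2.le, le_rfl⟩ hs2
  have h5 := hk s ⟨has, hs2.le⟩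
  simp only [h.right] at h4
  linarith

/-- If `q₀ ≤ A / y < q` up to `b`, with the quadratic positive at `q₀` and `q`, then `(A / y)'`
dominates a multiple of `1 / (b - t)`, which contradicts boundedness. -/
lemma right_lower (h : IsArc A B C a b y) {q q₀ k : ℝ} (hq₀ : 0 < q₀) (hqq : q₀ ≤ q)
    (hk0 : 0 < k) (hk : ∀ t ∈ Icc a b, y t ≤ k * (b - t))
    (hev : ∀ᶠ t in 𝓝[<] b, q₀ ≤ A t / y t)
    (hP₀ : 0 < deriv A b + B b * q₀ - q₀ ^ 2)
    (hP : 0 < deriv A b + B b * q - q ^ 2) : ∀ᶠ t in 𝓝[<] b, q ≤ A t / y t := by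
  have hq : 0 < q := hq₀.trans_le hqq
  obtain ⟨δ, hδ, hδ1, hδ2⟩ : ∃ δ, 0 < δ ∧ δ < deriv A b + B b * q₀ - q₀ ^ 2 ∧
      δ < deriv A b + B b * q - q ^ 2 := by
    obtain ⟨δ, h1, h2⟩ := exists_between (lt_min hP₀ hP)
    exact ⟨δ, h1, lt_min_iff.1 h2⟩
  have h1 := (h.tendsto_arcPoly q nhdsWithin_le_nhds h.tendsto_right).eventually (lt_mem_nhds hδ2)
  have h2 := (h.tendsto_arcPoly q₀ nhdsWithin_le_nhds h.tendsto_right).eventually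
    (lt_mem_nhds hδ1)
  obtain ⟨d, hd, hd'⟩ := mem_nhdsLT_iff_exists_Ioo_subset.1
    (((h1.and h2).and hev).and (Ioo_mem_nhdsLT h.lt))
  have hdb : d < b := hd
  have hmem : ∀ t ∈ Ioo (max a d) b, t ∈ Ioo d b := fun t ht =>
    ⟨(le_max_right _ _).trans_lt ht.1, ht.2⟩
  refine h.right_lower_of_exists hq (le_max_left a d)
    (fun t ht => hδ.trans (hd' (hmem t ht)).1.1.1) ?_
  by_contra! hno
  refine not_bddAbove_of_div_le_deriv (max_lt h.lt hdb) (div_pos hδ hk0)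
    (fun t ht => h.hasDeriv_div (hd' (hmem t ht)).2) (fun t ht => ?_) (fun t ht => (hno t ht).le)
  obtain ⟨⟨⟨e1, e2⟩, e3⟩, e4⟩ := hd' (hmem t ht)
  have e1 : δ < arcPoly A B C y q t := e1
  have e2 : δ < arcPoly A B C y q₀ t := e2
  have e3 : q₀ ≤ A t / y t := e3
  have e5 := hno t ht
  have hy := h.pos t e4
  have hyk := hk t ⟨e4.1.le, e4.2.le⟩
  have hz : δ ≤ arcPoly A B C y (A t / y t) t := by
    generalize A t / y t = z at e3 e5 ⊢
    simp only [arcPoly] at e1 e2 ⊢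
    -- concavity of the quadratic between `q₀` and `q`
    have hlt : q₀ < q := e3.trans_lt e5
    have key : 0 ≤ (q - q₀) * ((deriv A t + B t * z - z ^ 2 - C t * y t * z) - δ) := by
      have e : (q - q₀) * ((deriv A t + B t * z - z ^ 2 - C t * y t * z) - δ) =
        (q - z) * ((deriv A t + B t * q₀ - q₀ ^ 2 - C t * y t * q₀) - δ) +
        (z - q₀) * ((deriv A t + B t * q - q ^ 2 - C t * y t * q) - δ) +
        (q - q₀) * ((q - z) * (z - q₀)) := by ring
      rw [e]
      have := sub_pos.2 hlt
      have := sub_pos.2 e5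
      have := sub_nonneg.2 e3
      have := sub_pos.2 e1
      have := sub_pos.2 e2
      positivity
    have := nonneg_of_mul_nonneg_right key (sub_pos.2 hlt)
    linarith
  rw [div_div]
  exact div_le_div₀ (hδ.le.trans hz) hz hy hyk

/-- Beyond the vertex of the quadratic, negativity at `q` extends to all larger values; so
`A / y > q` up to `b` would make `A / y` decrease without bound. -/
lemma right_upper (h : IsArc A B C a b y) {q k : ℝ} (hq : 0 < q) (hqB : B b < 2 * q)
    (hk0 : 0 < k) (hk : ∀ t ∈ Icc a b, y t ≤ k * (b - t))
    (hP : deriv A b + B b * q - q ^ 2 < 0) : ∀ᶠ t in 𝓝[<] b, A t / y t ≤ q := by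
  obtain ⟨δ, hδ1, hδ⟩ := exists_between hP
  have h1 := (h.tendsto_arcPoly q nhdsWithin_le_nhds h.tendsto_right).eventually (gt_mem_nhds hδ1)
  have h2 : Tendsto (fun t => B t - C t * y t) (𝓝[<] b) (𝓝 (B b - C b * 0)) :=
    ((h.contB.tendsto b).mono_left nhdsWithin_le_nhds).sub
      (((h.contC.tendsto b).mono_left nhdsWithin_le_nhds).mul h.tendsto_right)
  have h3 := h2.eventually (gt_mem_nhds (show B b - C b * 0 < 2 * q by linarith))
  obtain ⟨d, hd, hd'⟩ := mem_nhdsLT_iff_exists_Ioo_subset.1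
    ((h1.and h3).and (Ioo_mem_nhdsLT h.lt))
  have hdb : d < b := hd
  have hmem : ∀ t ∈ Ioo (max a d) b, t ∈ Ioo d b := fun t ht =>
    ⟨(le_max_right _ _).trans_lt ht.1, ht.2⟩
  by_cases hex : ∃ t ∈ Ioo (max a d) b, A t / y t ≤ q
  · obtain ⟨s, hs, hsq⟩ := hex
    have hsab := (hd' (hmem s hs)).2
    rw [div_le_iff₀ (h.pos s hsab)] at hsq
    filter_upwards [Ioo_mem_nhdsLT hs.2] with t ht
    rw [div_le_iff₀ (h.pos t ⟨hsab.1.trans ht.1, ht.2⟩)]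
    exact h.le_mul_of_arcPoly_neg hq hsab.1.le le_rfl hsq
      (fun r hr => ((hd' (hmem r ⟨hs.1.trans hr.1, hr.2⟩)).1.1 : _ < δ).trans hδ) t
      ⟨ht.1.le, ht.2.le⟩
  exfalso
  push Not at hex
  refine not_bddAbove_of_div_le_deriv (K := -q) (max_lt h.lt hdb) (div_pos (neg_pos.2 hδ) hk0)
    (fun t ht => (h.hasDeriv_div (hd' (hmem t ht)).2).neg) (fun t ht => ?_)
    (fun t ht => neg_le_neg (hex t ht).le)
  obtain ⟨⟨e1, e2⟩, e4⟩ := hd' (hmem t ht)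
  have e1 : arcPoly A B C y q t < δ := e1
  have e2 : B t - C t * y t < 2 * q := e2
  have e5 := hex t ht
  have hy := h.pos t e4
  have hyk := hk t ⟨e4.1.le, e4.2.le⟩
  have hz : -δ ≤ -arcPoly A B C y (A t / y t) t := by
    generalize A t / y t = z at e5 ⊢
    simp only [arcPoly] at e1 ⊢
    nlinarith [mul_pos (sub_pos.2 e5) (sub_pos.2 e2), mul_pos (sub_pos.2 e5) (sub_pos.2 e5)]
  rw [div_div, ← neg_div]
  exact div_le_div₀ ((neg_pos.2 hδ).le.trans hz) hz hy hyk

end IsArc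

lemma tendsto_of_eventually_between {l : Filter ℝ} {z : ℝ → ℝ} {Z lo : ℝ} (hlo : lo < Z)
    (h1 : ∀ q, lo < q → q < Z → ∀ᶠ t in l, q ≤ z t) (h2 : ∀ q, Z < q → ∀ᶠ t in l, z t ≤ q) :
    Tendsto z l (𝓝 Z) := by
  refine tendsto_order.2 ⟨fun p hp => ?_, fun p hp => ?_⟩
  · obtain ⟨q, hq1, hq2⟩ := exists_between (max_lt hp hlo)
    filter_upwards [h1 q ((le_max_right _ _).trans_lt hq1) hq2] with t ht
    exact ((le_max_left _ _).trans_lt hq1).trans_le ht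
  · obtain ⟨q, hq1, hq2⟩ := exists_between hp
    filter_upwards [h2 q hq1] with t ht
    exact ht.trans_lt hq2

namespace IsArc

lemma tendsto_div_left (h : IsArc A B C a b y) (hB : 0 < B a) (hA' : 0 ≤ deriv A a) :
    Tendsto (fun t => A t / y t) (𝓝[>] a) (𝓝 (B a / 2 + √(B a ^ 2 / 4 + deriv A a))) := by
  have hD : 0 ≤ B a ^ 2 / 4 + deriv A a := by positivity
  set S := √(B a ^ 2 / 4 + deriv A a) with hS
  have hS2 : S ^ 2 = B a ^ 2 / 4 + deriv A a := Real.sq_sqrt hD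
  have hSB : B a / 2 ≤ S := Real.le_sqrt_of_sq_le (by nlinarith)
  refine tendsto_of_eventually_between (lo := 0) (by linarith) (fun q h1 h2 => ?_) (fun q h1 => ?_)
  · exact h.left_lower h1 (by nlinarith)
  · exact h.left_upper (by linarith) (by nlinarith)

lemma tendsto_div_right (h : IsArc A B C a b y) {k : ℝ} (hk0 : 0 < k) (hkB : 2 * k ≤ B b)
    (hk : ∀ t ∈ Icc a b, y t ≤ k * (b - t)) (hkP : 0 < deriv A b + B b * k - k ^ 2) :
    Tendsto (fun t => A t / y t) (𝓝[<] b) (𝓝 (B b / 2 + √(B b ^ 2 / 4 + deriv A b))) := by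
  have hD : (B b / 2 - k) ^ 2 < B b ^ 2 / 4 + deriv A b := by nlinarith
  set S := √(B b ^ 2 / 4 + deriv A b) with hS
  have hS2 : S ^ 2 = B b ^ 2 / 4 + deriv A b := Real.sq_sqrt ((sq_nonneg _).trans hD.le)
  have hSB : B b / 2 - k < S := Real.lt_sqrt_of_sq_lt hD
  have hS0 : 0 ≤ S := Real.sqrt_nonneg _
  refine tendsto_of_eventually_between (lo := B b - k) (by linarith)
    (fun q h1 h2 => ?_) (fun q h1 => ?_)
  · obtain ⟨q₀, hq₀, hP₀, hlt⟩ : ∃ q₀, 0 < q₀ ∧ 0 < deriv A b + B b * q₀ - q₀ ^ 2 ∧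
        q₀ < B b - k := by
      have hc : Tendsto (fun p => deriv A b + B b * p - p ^ 2) (𝓝[<] (B b - k))
          (𝓝 (deriv A b + B b * (B b - k) - (B b - k) ^ 2)) :=
        (Continuous.tendsto (by fun_prop) _).mono_left nhdsWithin_le_nhds
      obtain ⟨q₀, e1, e2⟩ := ((hc.eventually (lt_mem_nhds (show 0 < _ by nlinarith))).and
        (Ioo_mem_nhdsLT (show 0 < B b - k by linarith))).exists
      exact ⟨q₀, e2.1, e1, e2.2⟩
    exact h.right_lower hq₀ (hlt.trans h1).le hk0 hk (h.right_lower_slow hq₀ hk hlt hP₀) hP₀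
      (by nlinarith)
  · exact h.right_upper (by linarith) (by linarith) hk0 hk (by nlinarith)

end IsArc
end

/-! ### Existence of the solution -/

/-- The solution vanishing at both ends, lying below the line `k (b - t)`. -/
lemma exists_arc {A B C : ℝ → ℝ} {a b k M : ℝ}
    (hA : ContDiff ℝ 1 A) (hB : Continuous B) (hC : Continuous C) (hBpos : ∀ t, 0 < B t)
    (hab : a < b) (hAa : A a = 0) (hAb : A b = 0) (hApos : ∀ t ∈ Ioo a b, 0 < A t)
    (hk0 : 0 < k) (hM : ∀ t ∈ Icc a b, A t ≤ M * (b - t))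
    (hk : ∀ t, M + |C t| * (b - a) * k ^ 2 - B t * k < -k ^ 2) :
    ∃ y, IsArc A B C a b y ∧ ∀ t ∈ Icc a b, y t ≤ k * (b - t) := by
  set β : ℝ → ℝ := fun t => (k * (b - t)) ^ 2 with hβ
  set φ : ℝ → ℝ → ℝ := fun t v => max (min v (β t)) 0 with hφ
  have hβc : Continuous β := by fun_prop
  have hβ0 : ∀ t, 0 ≤ β t := fun t => sq_nonneg _
  obtain ⟨u, huc, hu0, hu⟩ := exists_sqrt_solution (φ := φ) (R := β a) (a := a) (b := b)
    hA.continuous hB hC (fun v => by fun_prop)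
    (fun t v w h => max_le_max_right 0 (min_le_min_right _ h))
    (fun t v w => (abs_max_sub_max_le_abs _ _ _).trans
      (by simpa using abs_min_sub_min_le_max v (β t) w (β t)))
    (fun t v => le_max_right _ _)
    (fun t ht v => max_le ((min_le_right _ _).trans (by
      have h1 : 0 ≤ k * (b - t) := mul_nonneg hk0.le (by linarith [ht.2])
      have h2 : k * (b - t) ≤ k * (b - a) := by gcongr; exact ht.1
      exact pow_le_pow_left₀ h1 h2 2)) (hβ0 a))
    (fun t => (hBpos t).le) hab
  -- below level `0` the field equals `2 * A > 0`
  have hu_nonneg : ∀ t ∈ Icc a b, 0 ≤ u t := by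
    refine nonneg_of_deriv_pos_of_neg huc hu0.ge hu fun t ht hneg => ?_
    have : φ t (u t) = 0 := max_eq_right ((min_le_left _ _).trans hneg.le)
    simp only [this, Real.sqrt_zero]
    have := hApos t ht
    linarith
  -- above level `β` the field is smaller than `β'`
  have hu_le : ∀ t ∈ Icc a b, u t ≤ β t := by
    have hβd : ∀ t, HasDerivAt β (2 * (k * (b - t)) * (k * (-1))) t := fun t => by
      have := (((hasDerivAt_id t).const_sub b).const_mul k).pow 2
      refine (this.congr_deriv ?_).congr_of_eventuallyEq (Eventually.of_forall fun _ => rfl)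
      simp
    intro t ht
    have := nonneg_of_deriv_pos_of_neg (h := fun t => β t - u t) (hβc.continuousOn.sub huc)
      (by simpa [hu0] using hβ0 a) (fun t ht => (hβd t).sub (hu t ht)) (fun t ht hneg => ?_) t ht
    · exact sub_nonneg.1 this
    have h1 : φ t (u t) = β t := by
      simp only [hφ]
      rw [min_eq_right (by linarith), max_eq_left (hβ0 t)]
    have hbt : 0 < b - t := sub_pos.2 ht.2
    have h2 : √(β t) = k * (b - t) := Real.sqrt_sq (by positivity)
    rw [h1, h2]
    have h3 := hM t (Ioo_subset_Icc_self ht)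
    have h4 : C t * β t ≤ |C t| * (b - a) * k ^ 2 * (b - t) := by
      have e1 : C t * β t ≤ |C t| * β t := mul_le_mul_of_nonneg_right (le_abs_self _) (hβ0 t)
      have e2 : |C t| * β t = |C t| * k ^ 2 * (b - t) * (b - t) := by simp only [hβ]; ring
      have e3 : |C t| * k ^ 2 * (b - t) * (b - t) ≤ |C t| * k ^ 2 * (b - t) * (b - a) := by
        gcongr
        exact ht.1.le
      linarith
    have h5 := mul_lt_mul_of_pos_right (hk t) hbt
    nlinarith
  have hu_pos : ∀ t ∈ Ioo a b, 0 < u t := by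
    intro t ht
    refine (hu_nonneg t (Ioo_subset_Icc_self ht)).lt_of_ne' fun h0 => ?_
    have hmin : IsLocalMin u t := by
      filter_upwards [Icc_mem_nhds ht.1 ht.2] with s hs
      rw [h0]
      exact hu_nonneg s hs
    have h1 := hmin.hasDerivAt_eq_zero (hu t ht)
    have : φ t (u t) = 0 := max_eq_right ((min_le_left _ _).trans h0.le)
    simp only [this, Real.sqrt_zero] at h1
    have := hApos t ht
    linarith
  have hle : ∀ t ∈ Icc a b, √(u t) ≤ k * (b - t) := fun t ht =>
    Real.sqrt_le_iff.2 ⟨mul_nonneg hk0.le (by linarith [ht.2]), hu_le t ht⟩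
  refine ⟨fun t => √(u t), ⟨hab, hA.differentiable one_ne_zero, hA.continuous_deriv le_rfl,
    hB, hC, hAa, hAb, hApos, huc.sqrt, by simp [hu0], ?_,
    fun t ht => Real.sqrt_pos.2 (hu_pos t ht), fun t ht => ?_⟩, hle⟩
  · have := hle b ⟨hab.le, le_rfl⟩
    rw [sub_self, mul_zero] at this
    exact le_antisymm this (Real.sqrt_nonneg _)
  · have h1 : φ t (u t) = u t := by
      have ht' := Ioo_subset_Icc_self ht
      simp only [hφ]
      rw [min_eq_left (hu_le t ht'), max_eq_left (hu_nonneg t ht')]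
    have h2 := hu t ht
    rw [h1] at h2
    refine (h2.sqrt (hu_pos t ht).ne').congr_deriv ?_
    have h3 : √(u t) ≠ 0 := (Real.sqrt_pos.2 (hu_pos t ht)).ne'
    have h4 : √(u t) ^ 2 = u t := Real.sq_sqrt (hu_pos t ht).le
    field_simp
    rw [h4]
    ring

/-- The hypothesis on the coefficients provides the slope `k` of the upper barrier, together with a
bound `M` for `-A'`. -/
lemma exists_slope {T : ℝ} (hT : 0 < T) {A B C : ℝ → ℝ}
    (hA : ContDiff ℝ 1 A) (hB : ContDiff ℝ 1 B) (hC : ContDiff ℝ 1 C)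
    (hAper : Function.Periodic A T) (hBper : Function.Periodic B T)
    (hCper : Function.Periodic C T)
    (hcond : (sInf ((fun t => |B t|) '' Icc (0 : ℝ) T)) ^ 2 >
      -4 * sInf ((fun t => deriv A t) '' Icc (0 : ℝ) T) *
        (1 + T * sSup ((fun t => |C t|) '' Icc (0 : ℝ) T)))
    (hBpos : ∀ t : ℝ, 0 < B t)
    {a b : ℝ} (hab : a < b) (hAa : A a = 0) (hAb : A b = 0)
    (hApos : ∀ t ∈ Ioo a b, 0 < A t) :
    ∃ k M : ℝ, 0 < k ∧ (∀ t, 2 * k ≤ B t) ∧ (∀ t, -M ≤ deriv A t) ∧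
      (∀ t ∈ Icc a b, A t ≤ M * (b - t)) ∧
      (∀ t, M + |C t| * (b - a) * k ^ 2 - B t * k < -k ^ 2) := by
  have hA'c : Continuous (deriv A) := hA.continuous_deriv le_rfl
  have hAd : Differentiable ℝ A := hA.differentiable one_ne_zero
  have hA'per : Function.Periodic (deriv A) T := fun t => by
    have h1 : (fun s => A (s + T)) = A := funext hAper
    rw [← deriv_comp_add_const, h1]
  set m := sInf ((fun t => deriv A t) '' Icc (0 : ℝ) T) with hm
  set c := sSup ((fun t => |C t|) '' Icc (0 : ℝ) T) with hc
  set β := sInf ((fun t => |B t|) '' Icc (0 : ℝ) T) with hβ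
  have hmle : ∀ t, m ≤ deriv A t := fun t => by
    obtain ⟨s, hs, hst⟩ := hA'per.exists_mem_Ico₀ hT t
    rw [hst]
    exact csInf_le (isCompact_Icc.image hA'c).bddBelow ⟨s, Ico_subset_Icc_self hs, rfl⟩
  have hlec : ∀ t, |C t| ≤ c := fun t => by
    obtain ⟨s, hs, hst⟩ := hCper.exists_mem_Ico₀ hT t
    rw [hst]
    exact le_csSup (isCompact_Icc.image hC.continuous.abs).bddAbove
      ⟨s, Ico_subset_Icc_self hs, rfl⟩
  have hβle : ∀ t, β ≤ B t := fun t => by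
    obtain ⟨s, hs, hst⟩ := hBper.exists_mem_Ico₀ hT t
    rw [hst, ← abs_of_pos (hBpos s)]
    exact csInf_le (isCompact_Icc.image hB.continuous.abs).bddBelow
      ⟨s, Ico_subset_Icc_self hs, rfl⟩
  have hβ0 : 0 ≤ β := Real.sInf_nonneg (by rintro _ ⟨t, _, rfl⟩; exact abs_nonneg _)
  have hc0 : 0 ≤ c := (abs_nonneg _).trans (hlec 0)
  have hAle : ∀ t ∈ Icc a b, A t ≤ -m * (b - t) := by
    intro t ht
    have := Convex.mul_sub_le_image_sub_of_le_deriv convex_univ hAd.continuous.continuousOn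
      hAd.differentiableOn (C := m) (fun s _ => hmle s) t (mem_univ _) b (mem_univ _) ht.2
    linarith
  have hm0 : m < 0 := by
    have h1 : (a + b) / 2 ∈ Ioo a b := ⟨by linarith, by linarith⟩
    have h2 := hAle _ (Ioo_subset_Icc_self h1)
    have h3 := hApos _ h1
    by_contra! h4
    nlinarith [h1.2]
  -- a zero of `A` recurs after `T`, so the interval is no longer than a period
  have hbT : b - a ≤ T := by
    by_contra! h1
    have := hApos (a + T) ⟨by linarith, by linarith⟩
    rw [hAper a, hAa] at this
    exact this.false
  set S := 1 + T * c with hS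
  have hS1 : 1 ≤ S := by have := mul_nonneg hT.le hc0; linarith
  have hβpos : 0 < β := by
    refine hβ0.lt_of_ne' fun h0 => ?_
    rw [h0] at hcond
    nlinarith
  have hSpos : 0 < S := by linarith
  -- the vertex of the quadratic `S k² - β k - m`, where it is negative by the hypothesis
  refine ⟨β / (2 * S), -m, by positivity, fun t => ?_, fun t => by simpa using hmle t, hAle,
    fun t => ?_⟩
  · have : β / (2 * S) ≤ β / 2 := div_le_div_of_nonneg_left hβ0 two_pos (by linarith)
    linarith [hβle t]
  · have hkpos : 0 < β / (2 * S) := by positivity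
    have hkS : 2 * (S * (β / (2 * S))) = β := by field_simp
    set k := β / (2 * S)
    have e1 : |C t| * (b - a) * k ^ 2 ≤ c * T * k ^ 2 := by
      have := mul_le_mul (hlec t) hbT (by linarith) hc0
      gcongr
    have e2 : β * k ≤ B t * k := by gcongr; exact hβle t
    have e3 : S * k ^ 2 - β * k - m < 0 := by
      have : β * k = 2 * (S * k ^ 2) := by rw [← hkS]; ring
      have h4 : S * (4 * (S * k ^ 2)) = β ^ 2 := by rw [← hkS]; ring
      have h5 : S * (-4 * m) < S * (4 * (S * k ^ 2)) := by rw [h4]; linarith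
      have h6 := lt_of_mul_lt_mul_left h5 hSpos.le
      linarith
    have e4 : S * k ^ 2 = k ^ 2 + c * T * k ^ 2 := by rw [hS]; ring
    linarith

/-- under (H) with B > 0, between consecutive zeros a < b of A with A > 0 on (a,b),
there is a negative C¹ solution x* of (N) on (a,b) with prescribed limits of x* and x*′ at
both endpoints. -/
theorem negative_solution_both_endpoints
    (T : ℝ) (hT : 0 < T) (A B C : ℝ → ℝ)
    (hA : ContDiff ℝ 1 A) (hB : ContDiff ℝ 1 B) (hC : ContDiff ℝ 1 C)
    (hAper : Function.Periodic A T) (hBper : Function.Periodic B T)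
    (hCper : Function.Periodic C T)
    (hzero : ∃ t ∈ Icc (0 : ℝ) T, A t = 0)
    (hcond : (sInf ((fun t => |B t|) '' Icc (0 : ℝ) T)) ^ 2 >
      -4 * sInf ((fun t => deriv A t) '' Icc (0 : ℝ) T) *
        (1 + T * sSup ((fun t => |C t|) '' Icc (0 : ℝ) T)))
    (hBpos : ∀ t : ℝ, 0 < B t)
    (a b : ℝ) (hab : a < b) (hAa : A a = 0) (hAb : A b = 0)
    (hApos : ∀ t ∈ Ioo a b, 0 < A t) :
    ∃ x : ℝ → ℝ, ContDiffOn ℝ 1 x (Ioo a b) ∧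
      (∀ t ∈ Ioo a b, x t * deriv x t = A t + B t * x t + C t * x t ^ 2) ∧
      (∀ t ∈ Ioo a b, x t < 0) ∧
      Tendsto x (𝓝[>] a) (𝓝 0) ∧
      Tendsto (deriv x) (𝓝[>] a)
        (𝓝 (B a / 2 - Real.sqrt (B a ^ 2 / 4 + deriv A a))) ∧
      Tendsto x (𝓝[<] b) (𝓝 0) ∧
      Tendsto (deriv x) (𝓝[<] b)
        (𝓝 (B b / 2 - Real.sqrt (B b ^ 2 / 4 + deriv A b))) := by
  obtain ⟨k, M, hk0, hkB, hMA, hM, hk⟩ := exists_slope hT hA hB hC hAper hBper hCper hcond hBpos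
    hab hAa hAb hApos
  obtain ⟨y, hy, hyk⟩ := exists_arc hA hB.continuous hC.continuous hBpos hab hAa hAb hApos hk0
    hM hk
  have hder : ∀ t ∈ Ioo a b,
      HasDerivAt (fun t => -y t) (-(A t / y t - B t + C t * y t)) t :=
    fun t ht => (hy.hasDeriv t ht).neg
  have hA'a : 0 ≤ deriv A a := by
    have h1 : Tendsto (slope A a) (𝓝[>] a) (𝓝 (deriv A a)) :=
      ((hasDerivAt_iff_tendsto_slope.1 (hy.diffA a).hasDerivAt).mono_left
        (nhdsWithin_mono _ fun t ht => (ne_of_gt ht)))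
    refine ge_of_tendsto h1 ?_
    filter_upwards [Ioo_mem_nhdsGT hab] with t ht
    rw [slope_def_field, hAa, sub_zero]
    exact div_nonneg (hApos t ht).le (sub_nonneg.2 ht.1.le)
  have hkP : 0 < deriv A b + B b * k - k ^ 2 := by
    have h1 := hk b
    have h2 := hMA b
    have h3 : 0 ≤ |C b| * (b - a) * k ^ 2 :=
      mul_nonneg (mul_nonneg (abs_nonneg _) (by linarith)) (sq_nonneg _)
    linarith
  -- `x' = -(A / y) + B - C y`, so its limit at an endpoint comes from that of `A / y`
  have hlim : ∀ (e : ℝ) (l : Filter ℝ), l ≤ 𝓝 e → Ioo a b ∈ l → Tendsto y l (𝓝 0) →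
      Tendsto (fun t => A t / y t) l (𝓝 (B e / 2 + √(B e ^ 2 / 4 + deriv A e))) →
      Tendsto (deriv fun t => -y t) l (𝓝 (B e / 2 - √(B e ^ 2 / 4 + deriv A e))) := by
    intro e l hl hmem hy0 hz
    have h1 := ((hz.sub ((hy.contB.tendsto e).mono_left hl)).add
      (((hy.contC.tendsto e).mono_left hl).mul hy0)).neg
    have h2 : -(B e / 2 + √(B e ^ 2 / 4 + deriv A e) - B e + C e * 0) =
        B e / 2 - √(B e ^ 2 / 4 + deriv A e) := by ring
    rw [h2] at h1
    refine h1.congr' ?_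
    filter_upwards [hmem] with t ht
    exact (hder t ht).deriv.symm
  refine ⟨fun t => -y t, ?_, fun t ht => ?_, fun t ht => neg_neg_of_pos (hy.pos t ht),
    by simpa using hy.tendsto_left.neg, ?_, by simpa using hy.tendsto_right.neg, ?_⟩
  · have hyc : ContinuousOn y (Ioo a b) := hy.cont.mono Ioo_subset_Icc_self
    have := contDiffOn_succ_iff_deriv_of_isOpen (𝕜 := ℝ) (n := 0) (f := fun t => -y t)
      (isOpen_Ioo (a := a) (b := b))
    rw [zero_add] at this
    refine this.2 ⟨fun t ht => (hder t ht).differentiableAt.differentiableWithinAt,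
      by simp, contDiffOn_zero.2 ?_⟩
    refine ContinuousOn.congr (f := fun t => -(A t / y t - B t + C t * y t)) ?_
      fun t ht => (hder t ht).deriv
    exact (((hA.continuous.continuousOn.div hyc fun t ht => (hy.pos t ht).ne').sub
      hB.continuous.continuousOn).add (hC.continuous.continuousOn.mul hyc)).neg
  · rw [(hder t ht).deriv]
    have := (hy.pos t ht).ne'
    field_simp
    ring
  · exact hlim a _ nhdsWithin_le_nhds (Ioo_mem_nhdsGT hab) hy.tendsto_left
      (hy.tendsto_div_left (hBpos a) hA'a)
  · exact hlim b _ nhdsWithin_le_nhds (Ioo_mem_nhdsLT hab) hy.tendsto_right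
      (hy.tendsto_div_right hk0 (hkB b) hyk hkP)
end

section
/- Assume (H). Then every T-periodic solution x of (N) on ℝ with nonconstant sign has the sign of −A·B, i.e., for every t ∈ ℝ: x(t) < 0 whenever A(t)·B(t) > 0, x(t) > 0 whenever A(t)·B(t) < 0, and x(t) = 0 if and only if A(t) = 0. -/
/-!
Write `m = min |B|`, `-α = min A'`, `K = max |C|`. Rolle's theorem gives `α ≥ 0`, so the hypothesis
`m² > 4α(1 + TK)` forces `m > 0` and `B` has constant sign; replacing `x` by `-x` one may assume
`B ≥ m > 0`.

Put `c = m / (2(1 + TK))`, for which `c²(1 + TK) - mc + α < 0`. If `A t₁ ≥ 0` and `x t₁ > 0`, then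
`A (t₁ + s) ≥ -α s`, and wherever `x (t₁ + s) = c s` with `0 < s ≤ T` the equation gives
`x' ≥ -α / c + m - K c s > c`. Hence the line `c s` is a lower barrier for `s ↦ x (t₁ + s)` on
`[0, T]`, so `x` is positive over a whole period and has no zero. Therefore `A t ≥ 0` implies
`x t ≤ 0` (`nonpos_of_nonneg_coeff`). The reflection `x ↦ -x(-t)`, `A ↦ -A(-t)` preserves all the
hypotheses and shows that `A t ≤ 0` implies `x t ≥ 0`. Since `x t = 0` implies `A t = 0` by the
equation, the sign of `x` is that of `-A`.
-/

open Set Filter Topology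

/-- The barrier argument: the line of slope `m / (2(1 + TK))` issued from `(t₁, 0)` stays below `x`
for a whole period if `A t₁ ≥ 0` and `x t₁ > 0`. -/
theorem nonpos_of_nonneg_coeff {T α m K : ℝ} (hT : 0 < T) (hm : 0 < m) (hK : 0 ≤ K)
    (hcond : 4 * α * (1 + T * K) < m ^ 2) {A B C x : ℝ → ℝ}
    (hA : Differentiable ℝ A) (hA' : ∀ t, -α ≤ deriv A t)
    (hB : ∀ t, m ≤ B t) (hC : ∀ t, |C t| ≤ K) (hx : Differentiable ℝ x)
    (hsol : ∀ t, x t * deriv x t = A t + B t * x t + C t * x t ^ 2)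
    (hper : Function.Periodic x T) (hx0 : ∃ t₀, x t₀ = 0) (t₁ : ℝ) (ht₁ : 0 ≤ A t₁) :
    x t₁ ≤ 0 := by
  by_contra! hpos
  have hD : 0 < 1 + T * K := by positivity
  obtain ⟨c, hc⟩ : ∃ c, c = m / (2 * (1 + T * K)) := ⟨_, rfl⟩
  have hc0 : 0 < c := by rw [hc]; positivity
  have hmc : m = 2 * (1 + T * K) * c := by rw [hc]; field_simp
  have hα : α < (1 + T * K) * c ^ 2 := by
    rw [hmc] at hcond
    have h : (1 + T * K) * α < (1 + T * K) * ((1 + T * K) * c ^ 2) := by nlinarith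
    exact lt_of_mul_lt_mul_left h hD.le
  have key : ∀ t ∈ Icc t₁ (t₁ + T), c * (t - t₁) ≤ x t := by
    intro t ht
    refine image_le_of_deriv_right_lt_deriv_boundary (f := fun t => c * (t - t₁))
      (f' := fun _ => c) (B' := deriv x) (by fun_prop) ?_ (by simpa using hpos.le)
      (fun t => (hx t).hasDerivAt) ?_ ht
    · intro t _
      simpa using (((hasDerivAt_id t).sub_const t₁).const_mul c).hasDerivWithinAt
    · intro t ht heq
      obtain ⟨s, rfl⟩ : ∃ s, t = t₁ + s := ⟨t - t₁, by ring⟩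
      rw [add_sub_cancel_left] at heq
      have hs : 0 < s := by
        rcases (show 0 ≤ s by linarith [ht.1]).eq_or_lt with h | h
        · subst h; simp at heq; linarith
        · exact h
      have hsT : s < T := by linarith [ht.2]
      have hAs : -α * s ≤ A (t₁ + s) := by
        have := mul_sub_le_image_sub_of_le_deriv hA hA' (show t₁ ≤ t₁ + s by linarith)
        rw [add_sub_cancel_left] at this
        linarith
      have h := hsol (t₁ + s)
      rw [← heq] at h
      have hcs : 0 < c * s := mul_pos hc0 hs
      have hBs : m * (c * s) ≤ B (t₁ + s) * (c * s) := mul_le_mul_of_nonneg_right (hB _) hcs.le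
      have hCs : -K * (c * s) ^ 2 ≤ C (t₁ + s) * (c * s) ^ 2 :=
        mul_le_mul_of_nonneg_right (neg_le_of_abs_le (hC _)) (sq_nonneg _)
      have hKT : K * (c * s) ^ 2 ≤ s * (T * K * c ^ 2) := by
        have : 0 ≤ K * c ^ 2 * s * (T - s) := by
          have := sub_pos.2 hsT
          positivity
        nlinarith
      have hαs : α * s < (1 + T * K) * c ^ 2 * s := mul_lt_mul_of_pos_right hα hs
      rw [hmc] at hBs
      refine lt_of_mul_lt_mul_left (a := c * s) ?_ hcs.le
      nlinarith
  obtain ⟨t₀, ht₀⟩ := hx0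
  obtain ⟨t, ht, hxt⟩ := hper.exists_mem_Ico hT t₀ t₁
  have h := key t ⟨ht.1, ht.2.le⟩
  rw [← hxt, ht₀] at h
  rcases ht.1.eq_or_lt with h1 | h1
  · subst h1; linarith
  · nlinarith [mul_pos hc0 (sub_pos.2 h1)]

/-- The case `B > 0`: the second half follows from the first by the symmetry
`(x, A, B, C)(t) ↦ (-x, -A, B, -C)(-t)`. -/
theorem sign_of_pos_coeff {T α m K : ℝ} (hT : 0 < T) (hm : 0 < m) (hK : 0 ≤ K)
    (hcond : 4 * α * (1 + T * K) < m ^ 2) {A B C x : ℝ → ℝ}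
    (hA : Differentiable ℝ A) (hA' : ∀ t, -α ≤ deriv A t)
    (hB : ∀ t, m ≤ B t) (hC : ∀ t, |C t| ≤ K) (hx : Differentiable ℝ x)
    (hsol : ∀ t, x t * deriv x t = A t + B t * x t + C t * x t ^ 2)
    (hper : Function.Periodic x T) (hx0 : ∃ t₀, x t₀ = 0) (t : ℝ) :
    (0 ≤ A t → x t ≤ 0) ∧ (A t ≤ 0 → 0 ≤ x t) := by
  refine ⟨nonpos_of_nonneg_coeff hT hm hK hcond hA hA' hB hC hx hsol hper hx0 t, fun h => ?_⟩
  have hd : ∀ (f : ℝ → ℝ), ∀ t, deriv (fun t => -f (-t)) t = deriv f (-t) := by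
    intro f t
    rw [deriv.fun_neg, deriv_comp_neg, neg_neg]
  have := nonpos_of_nonneg_coeff (A := fun t => -A (-t)) (B := fun t => B (-t))
    (C := fun t => -C (-t)) (x := fun t => -x (-t)) hT hm hK hcond (by fun_prop)
    (fun t => by rw [hd]; exact hA' _) (fun t => hB _) (fun t => by rw [abs_neg]; exact hC _)
    (by fun_prop) (fun t => by rw [hd]; linear_combination -hsol (-t))
    (fun t => by
      have := hper (-(t + T))
      rw [show -(t + T) + T = -t by ring] at this
      simp only [this])
    (by obtain ⟨t₀, h⟩ := hx0; exact ⟨-t₀, by simp [h]⟩) (-t) (by simpa using h)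
  simpa using this

/-- under (H), every T-periodic solution of (N) with nonconstant sign
has the sign of −A·B. -/
theorem nonconstant_sign_solution_has_sign
    (T : ℝ) (hT : 0 < T) (A B C : ℝ → ℝ)
    (hA : ContDiff ℝ 1 A) (hB : ContDiff ℝ 1 B) (hC : ContDiff ℝ 1 C)
    (hAper : Function.Periodic A T) (hBper : Function.Periodic B T)
    (hCper : Function.Periodic C T)
    (hzero : ∃ t ∈ Icc (0 : ℝ) T, A t = 0)
    (hcond : (sInf ((fun t => |B t|) '' Icc (0 : ℝ) T)) ^ 2 >
      -4 * sInf ((fun t => deriv A t) '' Icc (0 : ℝ) T) *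
        (1 + T * sSup ((fun t => |C t|) '' Icc (0 : ℝ) T)))
    (x : ℝ → ℝ) (hxdiff : Differentiable ℝ x)
    (hxsol : ∀ t : ℝ, x t * deriv x t = A t + B t * x t + C t * x t ^ 2)
    (hxper : Function.Periodic x T)
    (hx0 : ∃ t₀ : ℝ, x t₀ = 0) (hxne : ∃ t : ℝ, x t ≠ 0) :
    (∀ t : ℝ, 0 < A t * B t → x t < 0) ∧
    (∀ t : ℝ, A t * B t < 0 → 0 < x t) ∧
    (∀ t : ℝ, x t = 0 ↔ A t = 0) := by
  obtain ⟨m, hmdef⟩ : ∃ m, m = sInf ((fun t => |B t|) '' Icc (0 : ℝ) T) := ⟨_, rfl⟩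
  obtain ⟨a, hadef⟩ : ∃ a, a = sInf ((fun t => deriv A t) '' Icc (0 : ℝ) T) := ⟨_, rfl⟩
  obtain ⟨K, hKdef⟩ : ∃ K, K = sSup ((fun t => |C t|) '' Icc (0 : ℝ) T) := ⟨_, rfl⟩
  rw [← hmdef, ← hadef, ← hKdef] at hcond
  have hA'cont : Continuous (deriv A) := hA.continuous_deriv le_rfl
  have hA'per : Function.Periodic (deriv A) T := fun t => by
    rw [← deriv_comp_add_const, show (fun s => A (s + T)) = A from funext hAper]
  have hcomp : IsCompact (Icc (0 : ℝ) T) := isCompact_Icc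
  have hBm : ∀ t, m ≤ |B t| := fun t => by
    obtain ⟨s, hs, hst⟩ := hBper.exists_mem_Ico₀ hT t
    rw [hst, hmdef]
    exact csInf_le (hcomp.image (by fun_prop)).bddBelow
      (mem_image_of_mem (fun t => |B t|) (Ico_subset_Icc_self hs))
  have hAa : ∀ t, a ≤ deriv A t := fun t => by
    obtain ⟨s, hs, hst⟩ := hA'per.exists_mem_Ico₀ hT t
    rw [hst, hadef]
    exact csInf_le (hcomp.image hA'cont).bddBelow
      (mem_image_of_mem (fun t => deriv A t) (Ico_subset_Icc_self hs))
  have hCK : ∀ t, |C t| ≤ K := fun t => by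
    obtain ⟨s, hs, hst⟩ := hCper.exists_mem_Ico₀ hT t
    rw [hst, hKdef]
    exact le_csSup (hcomp.image (by fun_prop)).bddAbove
      (mem_image_of_mem (fun t => |C t|) (Ico_subset_Icc_self hs))
  have hK : 0 ≤ K := (abs_nonneg _).trans (hCK 0)
  have ha : a ≤ 0 := by
    obtain ⟨s, _, hs⟩ := exists_deriv_eq_zero hT hA.continuous.continuousOn
      (by simpa using (hAper 0).symm)
    exact hs ▸ hAa s
  have hm0 : 0 ≤ m := by
    rw [hmdef]
    apply Real.sInf_nonneg
    rintro _ ⟨t, _, rfl⟩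
    exact abs_nonneg _
  have hm : 0 < m := by
    have h1 : 0 ≤ -4 * a * (1 + T * K) := mul_nonneg (by linarith) (by positivity)
    exact hm0.lt_of_ne' fun h => by rw [h] at hcond; norm_num at hcond; linarith
  have hcond' : 4 * (-a) * (1 + T * K) < m ^ 2 := by linarith
  have hAd : Differentiable ℝ A := hA.differentiable one_ne_zero
  have hAa' : ∀ t, -(-a) ≤ deriv A t := fun t => by rw [neg_neg]; exact hAa t
  have hzA : ∀ t, x t = 0 → A t = 0 := fun t ht => by
    have := hxsol t
    simp only [ht] at this
    linarith
  have hBsign : (∀ t, 0 < B t) ∨ (∀ t, B t < 0) := by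
    by_contra! hcon
    obtain ⟨⟨s, hs⟩, ⟨r, hr⟩⟩ := hcon
    obtain ⟨z, hz⟩ := mem_range_of_exists_le_of_exists_ge hB.continuous ⟨s, hs⟩ ⟨r, hr⟩
    have := hBm z
    rw [hz, abs_zero] at this
    linarith
  rcases hBsign with hBp | hBn
  · have key := sign_of_pos_coeff hT hm hK hcond' hAd hAa'
      (fun t => (abs_of_pos (hBp t)) ▸ hBm t) hCK hxdiff hxsol hxper hx0
    refine ⟨fun t h => ?_, fun t h => ?_, fun t => ⟨hzA t, fun h => ?_⟩⟩
    · have hAt : 0 < A t := pos_of_mul_pos_left h (hBp t).le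
      exact lt_of_le_of_ne ((key t).1 hAt.le) fun h0 => hAt.ne' (hzA t h0)
    · have hAt : A t < 0 := by
        by_contra! hn
        exact h.not_ge (mul_nonneg hn (hBp t).le)
      exact lt_of_le_of_ne ((key t).2 hAt.le) fun h0 => hAt.ne (hzA t h0.symm)
    · exact le_antisymm ((key t).1 h.ge) ((key t).2 h.le)
  -- `-x` solves the equation with `B` replaced by `-B`.
  · have key := sign_of_pos_coeff (B := fun t => -B t) (x := fun t => -x t) hT hm hK hcond' hAd
      hAa' (fun t => (abs_of_neg (hBn t)) ▸ hBm t) hCK (by fun_prop)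
      (fun t => by rw [deriv.fun_neg]; linear_combination hxsol t)
      (fun t => by simp only [hxper t]) (by simpa using hx0)
    simp only [neg_nonneg, neg_nonpos] at key
    refine ⟨fun t h => ?_, fun t h => ?_, fun t => ⟨hzA t, fun h => ?_⟩⟩
    · have hAt : A t < 0 := by
        by_contra! hn
        exact h.not_ge (mul_nonpos_of_nonneg_of_nonpos hn (hBn t).le)
      exact lt_of_le_of_ne ((key t).2 hAt.le) fun h0 => hAt.ne (hzA t h0)
    · have hAt : 0 < A t := by
        by_contra! hn
        exact h.not_ge (mul_nonneg_of_nonpos_of_nonpos hn (hBn t).le)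
      exact lt_of_le_of_ne ((key t).1 hAt.le) fun h0 => hAt.ne' (hzA t h0.symm)
    · exact le_antisymm ((key t).2 h.le) ((key t).1 h.ge)
end
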